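/- Let 0 < r ≤ 1 ≤ R, ε > 0, and let λ be one of the four phases λ_{ε₁,ε₂}. For any q ∈ [2, ∞] and q̄ ∈ [1, 2] with 1/q + 1/q̄ = 1, there exists a constant C > 0, depending only on γ̄ and ψ, such that for every t > 0 and every f ∈ L^{q̄}(ℝ³), ‖Ψ_{r,R}(D) G_λ(t) f‖_{L^q(ℝ³)} ≤ C [R³ min{1, r^{−2} (ε/t)^{1/2}}]^{1 − 2/q} ‖f‖_{L^{q̄}(ℝ³)}. -/

import Mathlib

/- Common setup: the space ℝ³ (as a Euclidean space), Fourier transform,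
   partial derivatives, Sobolev-type norms. -/

noncomputable section

open MeasureTheory Real Complex Filter ENNReal

/-- The space `ℝ³`. -/
abbrev E3 : Type := EuclideanSpace ℝ (Fin 3)

/-- Fourier transform on `ℝ³`. -/
def FT (f : E3 → ℂ) : E3 → ℂ := FourierTransform.fourier f

/-- Inverse Fourier transform on `ℝ³`. -/
def FTinv (f : E3 → ℂ) : E3 → ℂ := FourierTransformInv.fourierInv f

/-- The point `(x₁, x₂, x₃) ∈ ℝ³`. -/
def pt (x1 x2 x3 : ℝ) : E3 := (EuclideanSpace.equiv (Fin 3) ℝ).symm ![x1, x2, x3]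

/-- Fourier transform of a real-valued function. -/
def FTr (f : E3 → ℝ) : E3 → ℂ := FT (fun x => (f x : ℂ))

/-- Partial derivative `∂ᵢ` of a real-valued function. -/
def pd (i : Fin 3) (f : E3 → ℝ) (x : E3) : ℝ := fderiv ℝ f x (EuclideanSpace.single i 1)

/-- Partial derivative `∂ᵢ` of a complex-valued function. -/
def pdC (i : Fin 3) (f : E3 → ℂ) (x : E3) : ℂ := fderiv ℝ f x (EuclideanSpace.single i 1)

/-- A smooth cut-off function `ψ` with values in `[0,1]`, equal to `1` on `(-∞,1]`
and to `0` on `[2,∞)`. -/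
def IsCutoff (ψ : ℝ → ℝ) : Prop :=
  ContDiff ℝ (⊤ : ℕ∞) ψ ∧ (∀ x, ψ x ∈ Set.Icc (0:ℝ) 1) ∧ (∀ x ≤ (1:ℝ), ψ x = 1) ∧
    (∀ x, (2:ℝ) ≤ x → ψ x = 0)

/-- The norm `|ξ_h|` of the horizontal component of a frequency `ξ`. -/
def xih (ξ : E3) : ℝ := Real.sqrt (ξ 0 ^ 2 + ξ 1 ^ 2)

/-- The frequency cut-off function `Ψ_{r,R}`. -/
def Psi (ψ : ℝ → ℝ) (r R : ℝ) (ξ : E3) : ℝ :=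
  ψ (‖ξ‖ / R) * ((1 - ψ (xih ξ / r)) * (1 - ψ (|ξ 2| / r)))

/-- The set `C_{r,R} = {ξ : |ξ| ≤ R, |ξ_h| ≥ r, |ξ₃| ≥ r}`. -/
def CrR (r R : ℝ) : Set E3 := {ξ | ‖ξ‖ ≤ R ∧ r ≤ xih ξ ∧ r ≤ |ξ 2|}

/-- The frequency cut-off operator `Ψ_{r,R}(D) g = 𝓕⁻¹(Ψ_{r,R} ĝ)`. -/
def PsiD (ψ : ℝ → ℝ) (r R : ℝ) (g : E3 → ℂ) : E3 → ℂ :=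
  FTinv (fun ξ => (Psi ψ r R ξ : ℂ) * FT g ξ)

/-- The eigenvalues `λ_{ε₁,ε₂}(ξ)` of `B̂(ξ)`. -/
def lamEV (γ ε1 ε2 : ℝ) (ξ : E3) : ℂ :=
  (ε1 : ℂ) * (Complex.I / 2) *
    (((Real.sqrt (1 + γ ^ 2 * ‖ξ‖ ^ 2 + 2 * γ * ξ 2) +
      ε2 * Real.sqrt (1 + γ ^ 2 * ‖ξ‖ ^ 2 - 2 * γ * ξ 2)) : ℝ) : ℂ)

/-- The cut-off scalar propagator `Ψ_{r,R}(D) G_λ(t) f = 𝓕⁻¹(Ψ_{r,R}(ξ) e^{(t/ε)λ(ξ)} f̂(ξ))`. -/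
def PsiG (ψ : ℝ → ℝ) (r R γ ε1 ε2 ε t : ℝ) (f : E3 → ℂ) : E3 → ℂ :=
  FTinv (fun ξ => ((Psi ψ r R ξ : ℝ) : ℂ) *
    Complex.exp (((t / ε : ℝ) : ℂ) * lamEV γ ε1 ε2 ξ) * FT f ξ)

lemma fourier_L2_ae (f : E3 → ℂ) (hf : Integrable f) (h2 : MemLp f 2 volume) :
    (FourierTransform.fourier (h2.toLp f) : Lp (α := E3) ℂ 2) =ᵐ[volume] FT f := by
  apply ae_eq_of_integral_contDiff_smul_eq
  · exact (Lp.memLp _).locallyIntegrable (by norm_num)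
  · apply Continuous.locallyIntegrable
    exact VectorFourier.fourierIntegral_continuous Real.continuous_fourierChar
      (L := innerₗ E3) (by exact continuous_inner) hf
  · intro g hg hc
    have hg₁ : HasCompactSupport (Complex.ofRealCLM ∘ g) := hc.comp_left rfl
    have hg₂ : ContDiff ℝ (⊤ : ℕ∞) (Complex.ofRealCLM ∘ g) := by fun_prop
    set G := hg₁.toSchwartzMap hg₂ with hG
    have hGg : ∀ x, G x = (g x : ℂ) := fun x => by simp [hG]
    have e1 := congrArg (fun T => T G) (MeasureTheory.Lp.fourier_toTemperedDistribution_eq (h2.toLp f))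
    simp only [TemperedDistribution.fourier_apply, Lp.toTemperedDistribution_apply] at e1
    have e2 : ∫ ξ, (FourierTransform.fourier (G : E3 → ℂ) ξ) • (f ξ) = ∫ x, G x • FT f x :=
      VectorFourier.integral_fourierIntegral_smul_eq_flip (L := innerₗ E3)
        Real.continuous_fourierChar (by exact continuous_inner) G.integrable hf |>.trans (by
          congr 1; ext x; congr 1
          simp [FT, FourierTransform.fourier, VectorFourier.fourierIntegral, real_inner_comm])
    have e3 : ∫ x, (FourierTransform.fourier G : SchwartzMap E3 ℂ) x • (h2.toLp f : E3 → ℂ) x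
        = ∫ ξ, (FourierTransform.fourier (G : E3 → ℂ) ξ) • (f ξ) := by
      apply integral_congr_ae
      filter_upwards [h2.coeFn_toLp] with x hx
      rw [hx, SchwartzMap.fourier_coe]
    rw [e3, e2] at e1
    simp only [hGg] at e1
    simpa using e1.symm

lemma plancherel (f : E3 → ℂ) (hf : Integrable f) (h2 : MemLp f 2 volume) :
    eLpNorm (FT f) 2 volume = eLpNorm f 2 volume := by
  rw [← eLpNorm_congr_ae (fourier_L2_ae f hf h2), ← eLpNorm_congr_ae h2.coeFn_toLp]
  have := MeasureTheory.Lp.norm_fourier_eq (h2.toLp f)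
  rw [Lp.norm_def, Lp.norm_def] at this
  exact (ENNReal.toReal_eq_toReal_iff' (Lp.eLpNorm_ne_top _) (Lp.eLpNorm_ne_top _)).1 this

lemma plancherel_inv (f : E3 → ℂ) (hf : Integrable f) (h2 : MemLp f 2 volume) :
    eLpNorm (FTinv f) 2 volume = eLpNorm f 2 volume := by
  rw [← plancherel f hf h2]
  have : FTinv f = FT f ∘ (fun x => -x) := by
    ext x; exact Real.fourierInv_eq_fourier_neg f x
  rw [this]
  refine eLpNorm_comp_measurePreserving ?_ (Measure.measurePreserving_neg volume)
  apply Continuous.aestronglyMeasurable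
  exact VectorFourier.fourierIntegral_continuous Real.continuous_fourierChar
      (L := innerₗ E3) (by exact continuous_inner) hf


lemma lint_rpow (κ c : ℝ) (hκ : 0 < κ) (hc : 0 ≤ c) :
    ∫⁻ s in Set.Ioc 0 c, ENNReal.ofReal (s ^ (κ - 1)) = ENNReal.ofReal (c ^ κ / κ) := by
  have hi : IntervalIntegrable (fun s : ℝ => s ^ (κ - 1)) volume 0 c :=
    intervalIntegral.intervalIntegrable_rpow' (by linarith)
  rw [intervalIntegrable_iff_integrableOn_Ioc_of_le hc] at hi
  rw [← ofReal_integral_eq_lintegral_ofReal hi, ← intervalIntegral.integral_of_le hc,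
    integral_rpow (Or.inl (by linarith))]
  · rw [sub_add_cancel, Real.zero_rpow hκ.ne', sub_zero]
  · filter_upwards [ae_restrict_mem measurableSet_Ioc] with s hs
    exact Real.rpow_nonneg hs.1.le _

lemma interp_core (T : (E3 → ℂ) → (E3 → ℂ)) (M : ℝ) (hM : 0 < M)
    (hadd : ∀ f g, Integrable f → Integrable g → T (f + g) = T f + T g)
    (hmeas : ∀ f, Integrable f → Measurable (T f))
    (h1 : ∀ f, Integrable f → ∀ x, ‖T f x‖ ≤ M * ∫ y, ‖f y‖)
    (h2 : ∀ f, Integrable f → ∫⁻ x, ENNReal.ofReal (‖T f x‖ ^ 2) ≤ ∫⁻ x, ENNReal.ofReal (‖f x‖ ^ 2))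
    (p q : ℝ) (hq : 2 < q) (hpq : (p - 1) * (q - 1) = 1)
    (f : E3 → ℂ) (hfm : Measurable f) (hf : Integrable f)
    (hfp : Integrable (fun x => ‖f x‖ ^ p)) :
    ∫⁻ x, ENNReal.ofReal (‖T f x‖ ^ q) ≤
      ENNReal.ofReal (2 ^ q * (M ^ (q - 2) * (∫ x, ‖f x‖ ^ p) ^ (q - 1))) := by
  have hp1 : 0 < p - 1 := by
    by_contra h
    nlinarith
  set N : ℝ := ∫ x, ‖f x‖ ^ p with hN
  have hN0 : 0 ≤ N := integral_nonneg fun x => Real.rpow_nonneg (norm_nonneg _) _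
  have hTm := hmeas f hf
  rcases hN0.eq_or_lt with hNz | hNpos
  · -- f = 0 a.e.
    have hz : (fun x => ‖f x‖ ^ p) =ᵐ[volume] 0 :=
      (integral_eq_zero_iff_of_nonneg (fun x => Real.rpow_nonneg (norm_nonneg _) _) hfp).1 hNz.symm
    have hz' : (fun x => ‖f x‖) =ᵐ[volume] 0 := by
      filter_upwards [hz] with x hx
      have := (Real.rpow_eq_zero (norm_nonneg (f x)) (by linarith : p ≠ 0)).1 hx
      simpa using this
    have hTz : ∀ x, T f x = 0 := by
      intro x
      have := h1 f hf x
      rw [integral_congr_ae hz'] at this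
      simpa using this
    have : ∀ x, ENNReal.ofReal (‖T f x‖ ^ q) = 0 := by
      intro x; rw [hTz x, norm_zero, Real.zero_rpow (by linarith)]; simp
    simp [this]
  set A := M * N with hA
  have hApos : 0 < A := mul_pos hM hNpos
  set κ := q - 2 with hκ
  have hκpos : 0 < κ := by linarith
  have hum : Measurable (fun x => ‖f x‖) := hfm.norm
  have hym : Measurable (fun x => ‖T f x‖) := hTm.norm
  let F : E3 → ℝ → ℝ≥0∞ := fun x s => ENNReal.ofReal (s ^ (κ - 1)) *
    (if 2 * s < ‖T f x‖ then ENNReal.ofReal (‖T f x‖ ^ 2) else 0)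
  let G : E3 → ℝ → ℝ≥0∞ := fun x s => ENNReal.ofReal (s ^ (κ - 1)) *
    (if s * ‖f x‖ ^ (p - 1) ≤ A then ENNReal.ofReal (‖f x‖ ^ 2) else 0)
  have hFm : Measurable (Function.uncurry F) := by
    apply Measurable.mul
    · exact (measurable_snd.pow_const _).ennreal_ofReal
    · refine Measurable.ite (measurableSet_lt (measurable_snd.const_mul 2) (hym.comp measurable_fst)) ?_ measurable_const
      exact ((hym.comp measurable_fst).pow_const _).ennreal_ofReal
  have hGm : Measurable (Function.uncurry G) := by
    apply Measurable.mul
    · exact (measurable_snd.pow_const _).ennreal_ofReal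
    · refine Measurable.ite (measurableSet_le (measurable_snd.mul ((hum.comp measurable_fst).pow_const _)) measurable_const) ?_ measurable_const
      exact ((hum.comp measurable_fst).pow_const _).ennreal_ofReal
  -- key
  have key : ∀ s ∈ Set.Ioi (0:ℝ), ∫⁻ x, F x s ≤ 4 * ∫⁻ x, G x s := by
    intro s hs
    have hs : 0 < s := hs
    simp only [F, G]
    rw [lintegral_const_mul' _ _ ENNReal.ofReal_ne_top, lintegral_const_mul' _ _ ENNReal.ofReal_ne_top,
      mul_left_comm]
    gcongr
    let S : Set E3 := {x | s * ‖f x‖ ^ (p - 1) ≤ A}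
    have hS : MeasurableSet S := measurableSet_le (measurable_const.mul (hum.pow_const _)) measurable_const
    have hi1 : Integrable (S.indicator f) := hf.indicator hS
    have hi2 : Integrable (Sᶜ.indicator f) := hf.indicator hS.compl
    have hsum : S.indicator f + Sᶜ.indicator f = f := Set.indicator_self_add_compl S f
    have hT : ∀ x, T f x = T (S.indicator f) x + T (Sᶜ.indicator f) x := by
      intro x
      conv_lhs => rw [← hsum, hadd _ _ hi1 hi2]
      rfl
    have hsmall : ∀ x, ‖T (Sᶜ.indicator f) x‖ ≤ s := by
      intro x
      refine (h1 _ hi2 x).trans ?_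
      have : ∫ y, ‖Sᶜ.indicator f y‖ ≤ ∫ y, (s / A) * ‖f y‖ ^ p := by
        apply integral_mono hi2.norm (hfp.const_mul _)
        intro y
        by_cases hy : y ∈ S
        · have : Sᶜ.indicator f y = 0 := by simp [hy]
          simp only [this, norm_zero]
          positivity
        · have : Sᶜ.indicator f y = f y := by simp [hy]
          simp only [this]
          have hy' : A < s * ‖f y‖ ^ (p - 1) := not_le.1 hy
          have hfy : ‖f y‖ ^ p = ‖f y‖ * ‖f y‖ ^ (p - 1) := by
            rcases (norm_nonneg (f y)).eq_or_lt with h0 | h0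
            · rw [← h0, Real.zero_rpow (by linarith), zero_mul]
            · rw [← Real.rpow_one_add' (norm_nonneg _) (by linarith)]; congr 1; ring
          rw [hfy, div_mul_eq_mul_div, le_div_iff₀ hApos]
          nlinarith [norm_nonneg (f y)]
      rw [integral_const_mul, ← hN] at this
      calc M * _ ≤ M * (s / A * N) := by gcongr
        _ = s := by rw [hA]; field_simp
    calc ∫⁻ x, (if 2 * s < ‖T f x‖ then ENNReal.ofReal (‖T f x‖ ^ 2) else 0)
        ≤ ∫⁻ x, 4 * ENNReal.ofReal (‖T (S.indicator f) x‖ ^ 2) := by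
          apply lintegral_mono
          intro x
          dsimp only
          split_ifs with h
          · rw [show (4 : ℝ≥0∞) = ENNReal.ofReal 4 by simp, ← ENNReal.ofReal_mul (by norm_num)]
            apply ENNReal.ofReal_le_ofReal
            have ha : ‖T f x‖ ≤ ‖T (S.indicator f) x‖ + ‖T (Sᶜ.indicator f) x‖ := by
              rw [hT x]; exact norm_add_le _ _
            have hb := hsmall x
            nlinarith [norm_nonneg (T f x), norm_nonneg (T (S.indicator f) x)]
          · simp
      _ = 4 * ∫⁻ x, ENNReal.ofReal (‖T (S.indicator f) x‖ ^ 2) :=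
          lintegral_const_mul' _ _ (by norm_num)
      _ ≤ 4 * ∫⁻ x, ENNReal.ofReal (‖S.indicator f x‖ ^ 2) := mul_le_mul_right (h2 _ hi1) _
      _ = _ := by
          congr 1
          apply lintegral_congr
          intro x
          by_cases hx : s * ‖f x‖ ^ (p - 1) ≤ A
          · have : x ∈ S := hx
            simp [this, hx]
          · have : x ∉ S := hx
            simp [this, hx]
  have key2 : ∫⁻ x, ∫⁻ s in Set.Ioi 0, F x s ≤ 4 * ∫⁻ x, ∫⁻ s in Set.Ioi 0, G x s := by
    rw [lintegral_lintegral_swap hFm.aemeasurable, lintegral_lintegral_swap hGm.aemeasurable,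
      ← lintegral_const_mul' _ _ (by norm_num)]
    exact setLIntegral_mono' measurableSet_Ioi key
  have hFi : ∀ x, ∫⁻ s in Set.Ioi 0, F x s = ENNReal.ofReal (2 ^ (-κ) / κ) * ENNReal.ofReal (‖T f x‖ ^ q) := by
    intro x
    set y := ‖T f x‖ with hy
    have hy0 : 0 ≤ y := norm_nonneg _
    have : ∀ s, F x s = (Set.Iio (y / 2)).indicator (fun s => ENNReal.ofReal (y ^ 2) * ENNReal.ofReal (s ^ (κ - 1))) s := by
      intro s
      simp only [F, Set.indicator, Set.mem_Iio, lt_div_iff₀ (zero_lt_two' ℝ), mul_comm s 2, ← hy]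
      split_ifs <;> simp [mul_comm]
    simp only [this]
    rw [setLIntegral_indicator measurableSet_Iio, Set.inter_comm, Set.Ioi_inter_Iio,
      lintegral_const_mul' _ _ ENNReal.ofReal_ne_top, setLIntegral_congr Ioo_ae_eq_Ioc,
      lint_rpow κ _ hκpos (by positivity), ← ENNReal.ofReal_mul (by positivity), ← ENNReal.ofReal_mul (by positivity)]
    congr 1
    rw [Real.div_rpow hy0 (by norm_num), Real.rpow_neg (by norm_num)]
    have : y ^ q = y ^ 2 * y ^ κ := by
      rcases hy0.eq_or_lt with h0 | h0
      · rw [← h0, Real.zero_rpow (by linarith)]; simp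
      · rw [← Real.rpow_natCast, ← Real.rpow_add h0]; congr 1; push_cast; ring
    rw [this]
    field_simp
  have hGi : ∀ x, ∫⁻ s in Set.Ioi 0, G x s ≤ ENNReal.ofReal (A ^ κ / κ) * ENNReal.ofReal (‖f x‖ ^ p) := by
    intro x
    set u := ‖f x‖ with hu
    have hu0 : 0 ≤ u := norm_nonneg _
    rcases hu0.eq_or_lt with h0 | h0
    · have : ∀ s, G x s = 0 := by
        intro s
        have h00 : f x = 0 := norm_eq_zero.1 (hu.symm.trans h0.symm)
        simp [G, h00]
      simp [this]
    have hup : 0 < u ^ (p - 1) := Real.rpow_pos_of_pos h0 _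
    have : ∀ s, G x s = (Set.Iic (A / u ^ (p - 1))).indicator (fun s => ENNReal.ofReal (u ^ 2) * ENNReal.ofReal (s ^ (κ - 1))) s := by
      intro s
      simp only [G, Set.indicator, Set.mem_Iic, le_div_iff₀ hup, ← hu]
      split_ifs <;> simp [mul_comm]
    simp only [this]
    rw [setLIntegral_indicator measurableSet_Iic, Set.inter_comm, Set.Ioi_inter_Iic,
      lintegral_const_mul' _ _ ENNReal.ofReal_ne_top, 
      lint_rpow κ _ hκpos (by positivity), ← ENNReal.ofReal_mul (by positivity), ← ENNReal.ofReal_mul (by positivity)]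
    apply le_of_eq
    congr 1
    rw [Real.div_rpow hApos.le hup.le, ← Real.rpow_mul hu0]
    have : u ^ 2 = u ^ p * u ^ ((p - 1) * κ) := by
      rw [← Real.rpow_natCast, ← Real.rpow_add h0]; congr 1; push_cast
      rw [hκ]; linarith
    rw [this]
    have := (Real.rpow_pos_of_pos h0 ((p-1)*κ)).ne'
    field_simp
  simp only [hFi] at key2
  rw [lintegral_const_mul' _ _ ENNReal.ofReal_ne_top] at key2
  have key3 : ENNReal.ofReal (2 ^ (-κ) / κ) * ∫⁻ x, ENNReal.ofReal (‖T f x‖ ^ q) ≤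
      ENNReal.ofReal (4 * (A ^ κ / κ * N)) := by
    refine key2.trans ?_
    rw [ENNReal.ofReal_mul (by norm_num), ENNReal.ofReal_mul (by positivity), hN,
      ofReal_integral_eq_lintegral_ofReal hfp (Eventually.of_forall fun x => Real.rpow_nonneg (norm_nonneg _) _),
      ← lintegral_const_mul' _ _ ENNReal.ofReal_ne_top]
    simp only [ENNReal.ofReal_ofNat]
    gcongr with x
    exact hGi x
  have hc0 : (0:ℝ) < 2 ^ (-κ) / κ := by positivity
  have : ENNReal.ofReal (2 ^ q * (M ^ κ * N ^ (q - 1))) = (ENNReal.ofReal (2 ^ (-κ) / κ))⁻¹ * ENNReal.ofReal (4 * (A ^ κ / κ * N)) := by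
    rw [← ENNReal.ofReal_inv_of_pos hc0, ← ENNReal.ofReal_mul (by positivity)]
    congr 1
    rw [hA, Real.mul_rpow hM.le hN0, Real.rpow_neg (by norm_num), show q - 1 = κ + 1 by rw [hκ]; ring,
      Real.rpow_add hNpos, Real.rpow_one, show q = κ + 2 by rw [hκ]; ring, Real.rpow_add (by norm_num)]
    have := (Real.rpow_pos_of_pos (zero_lt_two' ℝ) κ).ne'
    norm_num
    field_simp
  rw [this]
  refine (ENNReal.mul_le_iff_le_inv ?_ ENNReal.ofReal_ne_top).1 key3
  intro h
  rw [ENNReal.ofReal_eq_zero] at h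
  linarith


lemma osc (χ χ' φ h h' : ℝ → ℝ) (δ L m k V : ℝ) (hδ : 0 < δ) (hL : δ ≤ L) (hm : 0 < m)
    (hk : k ≠ 0)
    (hχ : ∀ y ∈ Set.Icc δ L, HasDerivAt χ (χ' y) y) (hχc : ContinuousOn χ' (Set.Icc δ L))
    (hχ1 : ∀ y, |χ y| ≤ 1) (hV : ∫ y in δ..L, |χ' y| ≤ V)
    (hφ : ∀ y ∈ Set.Icc δ L, HasDerivAt φ (k * h y) y)
    (hh : ∀ y ∈ Set.Icc δ L, HasDerivAt h (h' y) y) (hhc : ContinuousOn h' (Set.Icc δ L))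
    (hlow : ∀ y ∈ Set.Icc δ L, m * y ≤ |h y|)
    (hup : ∀ y ∈ Set.Icc δ L, |h' y| * (m * y ^ 2) ≤ 4 * h y ^ 2) :
    ‖∫ y in δ..L, (χ y : ℂ) * Complex.exp (Complex.I * (φ y : ℂ))‖ ≤ (6 + V) / (|k| * m * δ) := by
  have hpos : ∀ y ∈ Set.Icc δ L, 0 < y := fun y hy => hδ.trans_le hy.1
  have hne : ∀ y ∈ Set.Icc δ L, h y ≠ 0 := fun y hy h0 => by
    have := hlow y hy
    rw [h0, abs_zero] at this
    have := mul_pos hm (hpos y hy)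
    linarith
  have hkpos : 0 < |k| := abs_pos.2 hk
  have hcI : ∀ {E : Type} [NormedAddCommGroup E] {g : ℝ → E}, ContinuousOn g (Set.Icc δ L) →
      IntervalIntegrable g volume δ L := fun hg => by
    apply ContinuousOn.intervalIntegrable; rwa [Set.uIcc_of_le hL]
  have hχcont : ContinuousOn χ (Set.Icc δ L) := fun y hy => (hχ y hy).continuousAt.continuousWithinAt
  have hhcont : ContinuousOn h (Set.Icc δ L) := fun y hy => (hh y hy).continuousAt.continuousWithinAt
  have hφcont : ContinuousOn φ (Set.Icc δ L) := fun y hy => (hφ y hy).continuousAt.continuousWithinAt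
  let u : ℝ → ℝ := fun y => χ y / h y
  let u' : ℝ → ℝ := fun y => (χ' y * h y - χ y * h' y) / h y ^ 2
  let v : ℝ → ℂ := fun y => Complex.exp (Complex.I * (φ y : ℂ)) / (Complex.I * k)
  let v' : ℝ → ℂ := fun y => h y * Complex.exp (Complex.I * (φ y : ℂ))
  have hkC : (k : ℂ) ≠ 0 := by exact_mod_cast hk
  have hu : ∀ y ∈ Set.Icc δ L, HasDerivAt u (u' y) y := fun y hy => (hχ y hy).div (hh y hy) (hne y hy)
  have hv : ∀ y ∈ Set.Icc δ L, HasDerivAt v (v' y) y := by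
    intro y hy
    have h1 := (((hφ y hy).ofReal_comp.const_mul Complex.I).cexp).div_const (Complex.I * k)
    refine h1.congr_deriv ?_
    have hI := Complex.I_ne_zero
    simp only [v']
    push_cast
    field_simp
  have hu'c : ContinuousOn u' (Set.Icc δ L) :=
    ((hχc.mul hhcont).sub (hχcont.mul hhc)).div (hhcont.pow 2) fun y hy => pow_ne_zero _ (hne y hy)
  have hec : ContinuousOn (fun y => Complex.exp (Complex.I * (φ y : ℂ))) (Set.Icc δ L) :=
    (continuousOn_const.mul (Complex.continuous_ofReal.comp_continuousOn hφcont)).cexp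
  have hv'c : ContinuousOn v' (Set.Icc δ L) := (Complex.continuous_ofReal.comp_continuousOn hhcont).mul hec
  have hvn : ∀ y, ‖v y‖ = 1 / |k| := by
    intro y
    simp only [v, norm_div, norm_mul, Complex.norm_I, Complex.norm_real, one_mul, Real.norm_eq_abs]
    rw [mul_comm, Complex.norm_exp_ofReal_mul_I]
  have ibp := intervalIntegral.integral_mul_deriv_eq_deriv_mul (a := δ) (b := L)
    (u := fun y => (u y : ℂ)) (v := v) (u' := fun y => (u' y : ℂ)) (v' := v')
    (fun y hy => by rw [Set.uIcc_of_le hL] at hy; exact (hu y hy).ofReal_comp)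
    (fun y hy => by rw [Set.uIcc_of_le hL] at hy; exact hv y hy)
    (hcI (Complex.continuous_ofReal.comp_continuousOn hu'c)) (hcI hv'c)
  have e0 : ∫ y in δ..L, (χ y : ℂ) * Complex.exp (Complex.I * (φ y : ℂ)) = ∫ y in δ..L, (u y : ℂ) * v' y := by
    apply intervalIntegral.integral_congr
    intro y hy
    rw [Set.uIcc_of_le hL] at hy
    have : (h y : ℂ) ≠ 0 := by exact_mod_cast hne y hy
    simp only [u, v']
    push_cast
    field_simp
  rw [e0, ibp]
  have hub : ∀ y ∈ Set.Icc δ L, |u y| ≤ 1 / (m * δ) := by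
    intro y hy
    simp only [u, abs_div]
    have h1 : m * δ ≤ |h y| := le_trans (by gcongr; exact hy.1) (hlow y hy)
    exact div_le_div₀ zero_le_one (hχ1 y) (by positivity) h1
  have hLm : L ∈ Set.Icc δ L := ⟨hL, le_rfl⟩
  have hδm : δ ∈ Set.Icc δ L := ⟨le_rfl, hL⟩
  have hu'b : ∀ y ∈ Set.Icc δ L, |u' y| ≤ 1 / (m * δ) * |χ' y| + 4 / m * (y ^ 2)⁻¹ := by
    intro y hy
    have hy0 := hpos y hy
    have e : u' y = χ' y / h y - χ y * (h' y / h y ^ 2) := by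
      simp only [u']
      have := hne y hy
      field_simp
    have h1 : m * δ ≤ |h y| := le_trans (by gcongr; exact hy.1) (hlow y hy)
    have hh2 : 0 < h y ^ 2 := by have := hne y hy; positivity
    have a1 : |χ' y / h y| ≤ 1 / (m * δ) * |χ' y| := by
      rw [abs_div, div_eq_mul_one_div, mul_comm]
      gcongr
    have a2 : |h' y / h y ^ 2| ≤ 4 / m * (y ^ 2)⁻¹ := by
      rw [abs_div, abs_of_pos hh2, ← div_eq_mul_inv, div_div, div_le_div_iff₀ hh2 (by positivity)]
      exact hup y hy
    rw [e]
    calc _ ≤ |χ' y / h y| + |χ y * (h' y / h y ^ 2)| := abs_sub _ _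
      _ ≤ _ := by
        rw [abs_mul]
        have := mul_le_mul (hχ1 y) a2 (abs_nonneg _) zero_le_one
        linarith
  have hint2 : ∫ y in δ..L, 4 / m * (y ^ 2)⁻¹ ≤ 4 / (m * δ) := by
    have : ∫ y in δ..L, 4 / m * (y ^ 2)⁻¹ = (-(4 / m) * L⁻¹) - (-(4 / m) * δ⁻¹) := by
      apply intervalIntegral.integral_eq_sub_of_hasDerivAt (f := fun y => -(4 / m) * y⁻¹)
      · intro y hy
        rw [Set.uIcc_of_le hL] at hy
        have := (hasDerivAt_inv (hpos y hy).ne').const_mul (-(4/m))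
        refine this.congr_deriv ?_
        ring
      · apply hcI
        exact continuousOn_const.mul ((continuousOn_pow 2).inv₀ fun y hy => pow_ne_zero _ (hpos y hy).ne')
    rw [this]
    have : 0 ≤ 4 / m * L⁻¹ := by have := hδ.trans_le hL; positivity
    have e : 4 / (m * δ) = 4 / m * δ⁻¹ := by field_simp
    rw [e]; linarith
  have hint : ‖∫ y in δ..L, (u' y : ℂ) * v y‖ ≤ (4 + V) / (|k| * m * δ) := by
    calc _ ≤ ∫ y in δ..L, 1 / |k| * (1 / (m * δ) * |χ' y| + 4 / m * (y ^ 2)⁻¹) := by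
          apply intervalIntegral.norm_integral_le_of_norm_le hL
          · refine Eventually.of_forall fun y hy => ?_
            rw [norm_mul, hvn, Complex.norm_real, mul_comm, Real.norm_eq_abs]
            gcongr
            exact hu'b y ⟨hy.1.le, hy.2⟩
          · apply hcI
            refine continuousOn_const.mul ((continuousOn_const.mul hχc.abs).add (continuousOn_const.mul ((continuousOn_pow 2).inv₀ fun y hy => pow_ne_zero _ (hpos y hy).ne')))
      _ = 1 / |k| * (1 / (m * δ) * (∫ y in δ..L, |χ' y|) + ∫ y in δ..L, 4 / m * (y ^ 2)⁻¹) := by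
          rw [intervalIntegral.integral_const_mul, intervalIntegral.integral_add, intervalIntegral.integral_const_mul]
          · exact (hcI hχc.abs).const_mul _
          · apply hcI
            exact continuousOn_const.mul ((continuousOn_pow 2).inv₀ fun y hy => pow_ne_zero _ (hpos y hy).ne')
      _ ≤ 1 / |k| * (1 / (m * δ) * V + 4 / (m * δ)) := by gcongr
      _ = _ := by field_simp; ring
  have hb : ∀ y ∈ Set.Icc δ L, ‖(u y : ℂ) * v y‖ ≤ 1 / (|k| * m * δ) := by
    intro y hy
    rw [norm_mul, hvn, Complex.norm_real, Real.norm_eq_abs]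
    calc _ ≤ 1 / (m * δ) * (1 / |k|) := by gcongr; exact hub y hy
      _ = _ := by field_simp
  calc _ ≤ ‖(u L : ℂ) * v L‖ + ‖(u δ : ℂ) * v δ‖ + ‖∫ y in δ..L, (u' y : ℂ) * v y‖ :=
        (norm_sub_le _ _).trans (by gcongr; exact norm_sub_le _ _)
    _ ≤ 1 / (|k| * m * δ) + 1 / (|k| * m * δ) + (4 + V) / (|k| * m * δ) := by
        gcongr
        · exact hb L hLm
        · exact hb δ hδm
    _ = _ := by ring


lemma cutoff_deriv_cont (ψ : ℝ → ℝ) (hψ : IsCutoff ψ) : Continuous (deriv ψ) :=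
  hψ.1.continuous_deriv (by simp)

lemma cutoff_hasDeriv (ψ : ℝ → ℝ) (hψ : IsCutoff ψ) (x : ℝ) : HasDerivAt ψ (deriv ψ x) x :=
  (hψ.1.differentiable (by simp) x).hasDerivAt

lemma cutoff_deriv_int (ψ : ℝ → ℝ) (hψ : IsCutoff ψ) : Integrable (fun x => |deriv ψ x|) := by
  refine ((cutoff_deriv_cont ψ hψ).abs).integrable_of_hasCompactSupport ?_
  refine HasCompactSupport.intro (isCompact_Icc (a := (1:ℝ)) (b := 2)) fun x hx => ?_
  rw [Set.mem_Icc, not_and_or, not_le, not_le] at hx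
  rw [abs_eq_zero]
  rcases hx with hx | hx
  · have : ψ =ᶠ[nhds x] fun _ => 1 := by
      filter_upwards [Iio_mem_nhds hx] with y hy
      exact hψ.2.2.1 y (le_of_lt hy)
    rw [this.deriv_eq]; simp
  · have : ψ =ᶠ[nhds x] fun _ => 0 := by
      filter_upwards [Ioi_mem_nhds hx] with y hy
      exact hψ.2.2.2 y (le_of_lt hy)
    rw [this.deriv_eq]; simp

lemma hasDeriv_sqrt_add (B y : ℝ) (hB : 0 ≤ B) (hy : 0 < y) :
    HasDerivAt (fun y : ℝ => Real.sqrt (B + y ^ 2)) (y / Real.sqrt (B + y ^ 2)) y := by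
  have h1 : HasDerivAt (fun y : ℝ => B + y ^ 2) (2 * y) y := by
    simpa using (hasDerivAt_pow 2 y).const_add B
  refine (h1.sqrt (by positivity)).congr_deriv ?_
  field_simp

lemma cont_sqrt_add (B : ℝ) (hB : 0 ≤ B) (δ L : ℝ) (hδ : 0 < δ) :
    ContinuousOn (fun y : ℝ => y / Real.sqrt (B + y ^ 2)) (Set.Icc δ L) := by
  apply ContinuousOn.div continuousOn_id (by fun_prop)
  intro y hy
  have : 0 < y := hδ.trans_le hy.1
  positivity

lemma tv (ψ : ℝ → ℝ) (hψ : IsCutoff ψ) (B c δ L : ℝ) (hB : 0 ≤ B) (hc : 0 < c) (hδ : 0 < δ) (hL : δ ≤ L) :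
    ∫ y in δ..L, |deriv ψ (Real.sqrt (B + y ^ 2) / c)| * (y / Real.sqrt (B + y ^ 2) / c) ≤
      ∫ x, |deriv ψ x| := by
  have := intervalIntegral.integral_comp_mul_deriv (a := δ) (b := L)
    (f := fun y => Real.sqrt (B + y ^ 2) / c) (f' := fun y => y / Real.sqrt (B + y ^ 2) / c)
    (g := fun x => |deriv ψ x|)
    (fun y hy => by
      rw [Set.uIcc_of_le hL] at hy
      exact (hasDeriv_sqrt_add B y hB (hδ.trans_le hy.1)).div_const c)
    (by rw [Set.uIcc_of_le hL]; exact (cont_sqrt_add B hB δ L hδ).div_const c)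
    (cutoff_deriv_cont ψ hψ).abs
  simp only [Function.comp_def] at this
  rw [this, intervalIntegral.integral_of_le]
  · exact setIntegral_le_integral (cutoff_deriv_int ψ hψ) (Eventually.of_forall fun x => abs_nonneg _)
  · have : 0 ≤ L := hδ.le.trans hL
    gcongr

def Ps (ψ : ℝ → ℝ) (r R p z y : ℝ) : ℝ :=
  ψ (Real.sqrt (p ^ 2 + z ^ 2 + y ^ 2) / R) * ((1 - ψ (Real.sqrt (p ^ 2 + y ^ 2) / r)) * (1 - ψ (|z| / r)))

def ph (γ ε2 p z y : ℝ) : ℝ :=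
  Real.sqrt (1 + γ ^ 2 * (p ^ 2 + z ^ 2 + y ^ 2) + 2 * γ * z) +
    ε2 * Real.sqrt (1 + γ ^ 2 * (p ^ 2 + z ^ 2 + y ^ 2) - 2 * γ * z)

lemma Ps_abs_le (ψ : ℝ → ℝ) (hψ : IsCutoff ψ) (r R p z y : ℝ) : |Ps ψ r R p z y| ≤ 1 := by
  have h1 := hψ.2.1 (Real.sqrt (p ^ 2 + z ^ 2 + y ^ 2) / R)
  have h2 := hψ.2.1 (Real.sqrt (p ^ 2 + y ^ 2) / r)
  have h3 := hψ.2.1 (|z| / r)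
  unfold Ps
  rw [abs_mul, abs_mul]
  have a1 : |ψ (Real.sqrt (p ^ 2 + z ^ 2 + y ^ 2) / R)| ≤ 1 := abs_le.2 ⟨by linarith [h1.1], h1.2⟩
  have a2 : |1 - ψ (Real.sqrt (p ^ 2 + y ^ 2) / r)| ≤ 1 := abs_le.2 ⟨by linarith [h2.2], by linarith [h2.1]⟩
  have a3 : |1 - ψ (|z| / r)| ≤ 1 := abs_le.2 ⟨by linarith [h3.2], by linarith [h3.1]⟩
  exact mul_le_one₀ a1 (by positivity) (mul_le_one₀ a2 (by positivity) a3)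

lemma Ps_zero (ψ : ℝ → ℝ) (hψ : IsCutoff ψ) (r R p z y : ℝ) (hR : 0 < R)
    (h : 2 * R ≤ |p| ∨ 2 * R ≤ |z| ∨ 2 * R ≤ |y|) : Ps ψ r R p z y = 0 := by
  unfold Ps
  rw [hψ.2.2.2, zero_mul]
  rw [le_div_iff₀ hR]
  apply Real.le_sqrt_of_sq_le
  have hh : (2 * R) ^ 2 ≤ p ^ 2 ∨ (2 * R) ^ 2 ≤ z ^ 2 ∨ (2 * R) ^ 2 ≤ y ^ 2 := by
    rcases h with h | h | h
    · left; rw [← sq_abs p]; gcongr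
    · right; left; rw [← sq_abs z]; gcongr
    · right; right; rw [← sq_abs y]; gcongr
  rcases hh with h | h | h <;> nlinarith [sq_nonneg p, sq_nonneg z, sq_nonneg y]

lemma hasDeriv_Q (γ A y : ℝ) (hγ : 0 < γ) (hA : 0 ≤ A) (hy : 0 < y) :
    HasDerivAt (fun y : ℝ => Real.sqrt (A + γ ^ 2 * y ^ 2)) (γ ^ 2 * y / Real.sqrt (A + γ ^ 2 * y ^ 2)) y := by
  have h1 : HasDerivAt (fun y : ℝ => A + γ ^ 2 * y ^ 2) (γ ^ 2 * (2 * y)) y := by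
    simpa using ((hasDerivAt_pow 2 y).const_mul (γ ^ 2)).const_add A
  refine (h1.sqrt (by positivity)).congr_deriv ?_
  field_simp

lemma low_alg (a b e d B : ℝ) (ha : 0 < a) (hb : 0 < b) (haB : a ≤ B) (hbB : b ≤ B)
    (he : e = 1 ∨ e = -1) (hd : |a ^ 2 - b ^ 2| = d) : d / (2 * B ^ 3) ≤ |1 / a + e * (1 / b)| := by
  have hB : 0 < B := ha.trans_le haB
  have h0 : |1 / a - 1 / b| ≤ |1 / a + e * (1 / b)| := by
    have hX : 0 < 1 / a := by positivity
    have hY : 0 < 1 / b := by positivity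
    rcases he with rfl | rfl
    · rw [one_mul, abs_of_pos (add_pos hX hY), abs_le]; constructor <;> linarith
    · apply le_of_eq; congr 1; ring
  refine le_trans ?_ h0
  have e1 : 1 / a - 1 / b = -(a ^ 2 - b ^ 2) / (a * b * (a + b)) := by field_simp; ring
  rw [e1, abs_div, abs_neg, hd, abs_of_pos (by positivity : 0 < a * b * (a + b))]
  have hd0 : 0 ≤ d := hd ▸ abs_nonneg _
  apply div_le_div_of_nonneg_left hd0 (by positivity)
  calc a * b * (a + b) ≤ B * B * (B + B) := by gcongr
    _ = _ := by ring

lemma up_alg (X Y e g : ℝ) (hX : 0 < X) (hY : 0 < Y) (hg : 0 < g) (h1 : g * X ≤ 1) (h2 : g * Y ≤ 1)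
    (he : e = 1 ∨ e = -1) :
    |(X + e * Y) - g ^ 2 * (X ^ 3 + e * Y ^ 3)| ≤ 4 * |X + e * Y| := by
  have e1 : (X + e * Y) - g ^ 2 * (X ^ 3 + e * Y ^ 3)
      = (X + e * Y) * (1 - ((g * X) ^ 2 - e * ((g * X) * (g * Y)) + (g * Y) ^ 2)) := by
    rcases he with rfl | rfl <;> ring
  rw [e1, abs_mul, mul_comm]
  gcongr
  have hx : 0 < g * X := by positivity
  have hy : 0 < g * Y := by positivity
  have hxy : 0 < (g * X) * (g * Y) := by positivity
  generalize g * X = x at *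
  generalize g * Y = y at *
  rw [abs_le]
  rcases he with rfl | rfl <;> constructor <;> nlinarith [sq_nonneg (x - y)]


lemma osc_seg (γ : ℝ) (hγ : 0 < γ) (ψ : ℝ → ℝ) (hψ : IsCutoff ψ) (r R p z k0 ε2 δ : ℝ)
    (hr : 0 < r) (hR : 1 ≤ R) (hp : |p| ≤ 2 * R) (hz : |z| ≤ 2 * R) (hz0 : z ≠ 0) (hk0 : k0 ≠ 0)
    (hε2 : ε2 = 1 ∨ ε2 = -1) (hδ : 0 < δ) (hδR : δ ≤ 2 * R) :
    ‖∫ y in δ..(2 * R), (Ps ψ r R p z y : ℂ) * Complex.exp (Complex.I * ((k0 * ph γ ε2 p z y : ℝ) : ℂ))‖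
      ≤ (6 + 2 * ∫ x, |deriv ψ x|) /
        (|k0 * γ ^ 2| * (4 * γ * |z| / (2 * ((1 + 4 * γ) * R) ^ 3)) * δ) := by
  have hR0 : 0 < R := by linarith
  set A1 : ℝ := γ ^ 2 * p ^ 2 + (1 + γ * z) ^ 2 with hA1
  set A2 : ℝ := γ ^ 2 * p ^ 2 + (1 - γ * z) ^ 2 with hA2
  have hA1n : 0 ≤ A1 := by positivity
  have hA2n : 0 ≤ A2 := by positivity
  let a : ℝ → ℝ := fun y => Real.sqrt (A1 + γ ^ 2 * y ^ 2)
  let b : ℝ → ℝ := fun y => Real.sqrt (A2 + γ ^ 2 * y ^ 2)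
  have hph : ∀ y, ph γ ε2 p z y = a y + ε2 * b y := by
    intro y
    simp only [ph, a, b, hA1, hA2]
    congr 2 <;> ring_nf
  have hpos : ∀ y ∈ Set.Icc δ (2 * R), 0 < y := fun y hy => hδ.trans_le hy.1
  have hap : ∀ y, 0 < y → 0 < a y := fun y hy => by simp only [a]; positivity
  have hbp : ∀ y, 0 < y → 0 < b y := fun y hy => by simp only [b]; positivity
  have had : ∀ y, 0 < y → HasDerivAt a (γ ^ 2 * y / a y) y := fun y hy => hasDeriv_Q γ A1 y hγ hA1n hy
  have hbd : ∀ y, 0 < y → HasDerivAt b (γ ^ 2 * y / b y) y := fun y hy => hasDeriv_Q γ A2 y hγ hA2n hy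
  have hac : Continuous a := by simp only [a]; fun_prop
  have hbc : Continuous b := by simp only [b]; fun_prop
  set B := (1 + 4 * γ) * R with hB
  have hpz : p ^ 2 ≤ 4 * R ^ 2 := by
    rw [← sq_abs p]; nlinarith [abs_nonneg p]
  have hzz : z ^ 2 ≤ 4 * R ^ 2 := by
    rw [← sq_abs z]; nlinarith [abs_nonneg z]
  have hgz : |γ * z| ≤ 2 * γ * R := by
    rw [abs_mul, abs_of_pos hγ]; nlinarith
  obtain ⟨hgz1, hgz2⟩ := abs_le.1 hgz
  have hbound : ∀ y ∈ Set.Icc δ (2 * R), ∀ s : ℝ, |s| ≤ 2 * γ * R →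
      Real.sqrt (γ ^ 2 * p ^ 2 + (1 + s) ^ 2 + γ ^ 2 * y ^ 2) ≤ B := by
    intro y hy s hs
    apply Real.sqrt_le_iff.2
    refine ⟨by positivity, ?_⟩
    have hyy : y ^ 2 ≤ 4 * R ^ 2 := by nlinarith [hpos y hy, hy.2]
    have h1 : γ ^ 2 * p ^ 2 ≤ γ ^ 2 * (4 * R ^ 2) := by gcongr
    have h2 : γ ^ 2 * y ^ 2 ≤ γ ^ 2 * (4 * R ^ 2) := by gcongr
    have h3 : (1 + s) ^ 2 ≤ (R + 2 * γ * R) ^ 2 := by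
      apply sq_le_sq'
      · have := (abs_le.1 hs).1; nlinarith
      · have := (abs_le.1 hs).2; nlinarith
    have : 0 < γ * R ^ 2 := by positivity
    rw [hB]
    nlinarith
  have haB : ∀ y ∈ Set.Icc δ (2 * R), a y ≤ B := fun y hy => hbound y hy (γ * z) hgz
  have hbB : ∀ y ∈ Set.Icc δ (2 * R), b y ≤ B := fun y hy => by
    have := hbound y hy (-(γ * z)) (by rwa [abs_neg])
    rwa [← sub_eq_add_neg] at this
  let κ0 := 1 - ψ (|z| / r)
  have hκ0 : |κ0| ≤ 1 := by
    have h3 := hψ.2.1 (|z| / r)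
    exact abs_le.2 ⟨by simp only [κ0]; linarith [h3.2], by simp only [κ0]; linarith [h3.1]⟩
  let ρ1 : ℝ → ℝ := fun y => Real.sqrt (p ^ 2 + z ^ 2 + y ^ 2)
  let ρ2 : ℝ → ℝ := fun y => Real.sqrt (p ^ 2 + y ^ 2)
  have hρ1 : ∀ y, 0 < y → HasDerivAt (fun y => ρ1 y / R) (y / ρ1 y / R) y := fun y hy =>
    (hasDeriv_sqrt_add (p ^ 2 + z ^ 2) y (by positivity) hy).div_const R
  have hρ2 : ∀ y, 0 < y → HasDerivAt (fun y => ρ2 y / r) (y / ρ2 y / r) y := fun y hy =>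
    (hasDeriv_sqrt_add (p ^ 2) y (by positivity) hy).div_const r
  have hρ1c : Continuous ρ1 := by simp only [ρ1]; fun_prop
  have hρ2c : Continuous ρ2 := by simp only [ρ2]; fun_prop
  have hψc : Continuous ψ := hψ.1.continuous
  have hdψc := cutoff_deriv_cont ψ hψ
  have hc1 : ContinuousOn (fun y => y / ρ1 y / R) (Set.Icc δ (2 * R)) :=
    (cont_sqrt_add (p ^ 2 + z ^ 2) (by positivity) δ (2 * R) hδ).div_const R
  have hc2 : ContinuousOn (fun y => y / ρ2 y / r) (Set.Icc δ (2 * R)) :=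
    (cont_sqrt_add (p ^ 2) (by positivity) δ (2 * R) hδ).div_const r
  have hd1 : Continuous (fun y => deriv ψ (ρ1 y / R)) := hdψc.comp (hρ1c.div_const R)
  have hd2 : Continuous (fun y => deriv ψ (ρ2 y / r)) := hdψc.comp (hρ2c.div_const r)
  have hs1 : Continuous (fun y => ψ (ρ1 y / R)) := hψc.comp (hρ1c.div_const R)
  have hs2 : Continuous (fun y => ψ (ρ2 y / r)) := hψc.comp (hρ2c.div_const r)
  let χ' : ℝ → ℝ := fun y => (deriv ψ (ρ1 y / R) * (y / ρ1 y / R)) * ((1 - ψ (ρ2 y / r)) * κ0)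
    + ψ (ρ1 y / R) * (-(deriv ψ (ρ2 y / r) * (y / ρ2 y / r)) * κ0)
  have hχ'c : ContinuousOn χ' (Set.Icc δ (2 * R)) := by
    apply ContinuousOn.add
    · exact (hd1.continuousOn.mul hc1).mul ((continuousOn_const.sub hs2.continuousOn).mul continuousOn_const)
    · exact hs1.continuousOn.mul ((hd2.continuousOn.mul hc2).neg.mul continuousOn_const)
  have hii : ∀ {g : ℝ → ℝ}, ContinuousOn g (Set.Icc δ (2 * R)) → IntervalIntegrable g volume δ (2 * R) :=
    fun hg => by apply ContinuousOn.intervalIntegrable; rwa [Set.uIcc_of_le hδR]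
  have hi1 : IntervalIntegrable (fun y => |deriv ψ (ρ1 y / R)| * (y / ρ1 y / R)) volume δ (2 * R) := hii (hd1.abs.continuousOn.mul hc1)
  have hi2 : IntervalIntegrable (fun y => |deriv ψ (ρ2 y / r)| * (y / ρ2 y / r)) volume δ (2 * R) := hii (hd2.abs.continuousOn.mul hc2)
  let h : ℝ → ℝ := fun y => y * (1 / a y + ε2 * (1 / b y))
  let h' : ℝ → ℝ := fun y => (1 / a y + ε2 * (1 / b y)) - (γ * y) ^ 2 * ((1 / a y) ^ 3 + ε2 * (1 / b y) ^ 3)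
  have hainv : ContinuousOn (fun y => 1 / a y) (Set.Icc δ (2 * R)) :=
    continuousOn_const.div hac.continuousOn fun y hy => (hap y (hpos y hy)).ne'
  have hbinv : ContinuousOn (fun y => 1 / b y) (Set.Icc δ (2 * R)) :=
    continuousOn_const.div hbc.continuousOn fun y hy => (hbp y (hpos y hy)).ne'
  have hlow : ∀ y ∈ Set.Icc δ (2 * R), 4 * γ * |z| / (2 * B ^ 3) ≤ |1 / a y + ε2 * (1 / b y)| := by
    intro y hy
    apply low_alg (a y) (b y) ε2 _ B (hap y (hpos y hy)) (hbp y (hpos y hy)) (haB y hy) (hbB y hy) hε2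
    simp only [a, b]
    rw [Real.sq_sqrt (by positivity), Real.sq_sqrt (by positivity)]
    have : A1 + γ ^ 2 * y ^ 2 - (A2 + γ ^ 2 * y ^ 2) = 4 * γ * z := by rw [hA1, hA2]; ring
    rw [this, abs_mul, abs_of_pos (by positivity : 0 < 4 * γ)]
  have hmpos : 0 < 4 * γ * |z| / (2 * B ^ 3) := by
    have := abs_pos.2 hz0
    positivity
  refine osc (Ps ψ r R p z) χ' (fun y => k0 * ph γ ε2 p z y) h h' δ (2 * R) _ (k0 * γ ^ 2)
    (2 * ∫ x, |deriv ψ x|) hδ hδR hmpos (mul_ne_zero hk0 (by positivity)) ?_ hχ'c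
    (Ps_abs_le ψ hψ r R p z) ?_ ?_ ?_ ?_ ?_ ?_
  · intro y hy
    have hy0 := hpos y hy
    have e1 := (cutoff_hasDeriv ψ hψ (ρ1 y / R)).comp y (hρ1 y hy0)
    have e2 := (cutoff_hasDeriv ψ hψ (ρ2 y / r)).comp y (hρ2 y hy0)
    exact e1.mul ((e2.const_sub 1).mul_const κ0)
  · calc ∫ y in δ..(2 * R), |χ' y| ≤ ∫ y in δ..(2 * R), (|deriv ψ (ρ1 y / R)| * (y / ρ1 y / R)
          + |deriv ψ (ρ2 y / r)| * (y / ρ2 y / r)) := by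
          apply intervalIntegral.integral_mono_on hδR (hii hχ'c.abs) (hi1.add hi2)
          intro y hy
          have hy0 := hpos y hy
          have q1 : 0 ≤ y / ρ1 y / R := by simp only [ρ1]; positivity
          have q2 : 0 ≤ y / ρ2 y / r := by simp only [ρ2]; positivity
          have w1 := hψ.2.1 (ρ1 y / R)
          have w2 := hψ.2.1 (ρ2 y / r)
          have a1 : |ψ (ρ1 y / R)| ≤ 1 := abs_le.2 ⟨by linarith [w1.1], w1.2⟩
          have a2 : |1 - ψ (ρ2 y / r)| ≤ 1 := abs_le.2 ⟨by linarith [w2.2], by linarith [w2.1]⟩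
          simp only [χ']
          refine (abs_add_le _ _).trans ?_
          rw [abs_mul, abs_mul, abs_mul, abs_mul, abs_mul, abs_neg, abs_mul, abs_of_nonneg q1, abs_of_nonneg q2]
          have t1 := mul_le_one₀ a2 (abs_nonneg κ0) hκ0
          have u1 : 0 ≤ |deriv ψ (ρ1 y / R)| * (y / ρ1 y / R) := by positivity
          have u2 : 0 ≤ |deriv ψ (ρ2 y / r)| * (y / ρ2 y / r) := by positivity
          have v1 := mul_le_mul_of_nonneg_left t1 u1
          have v2 := mul_le_mul_of_nonneg_left hκ0 u2
          have v3 := mul_le_mul a1 v2 (by positivity) zero_le_one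
          linarith
      _ = _ := intervalIntegral.integral_add hi1 hi2
      _ ≤ _ := by
          have t1 := tv ψ hψ (p ^ 2 + z ^ 2) R δ (2 * R) (by positivity) hR0 hδ hδR
          have t2 := tv ψ hψ (p ^ 2) r δ (2 * R) (by positivity) hr hδ hδR
          simp only [ρ1, ρ2]
          linarith
  · intro y hy
    have hy0 := hpos y hy
    have e := ((had y hy0).add ((hbd y hy0).const_mul ε2)).const_mul k0
    have e' : (fun y => k0 * ph γ ε2 p z y) = fun y => k0 * ((a + fun y => ε2 * b y) y) := by
      funext y; rw [hph y]; rfl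
    rw [e']
    refine e.congr_deriv ?_
    simp only [h]
    ring
  · intro y hy
    have hy0 := hpos y hy
    have ha0 := (hap y hy0).ne'
    have hb0 := (hbp y hy0).ne'
    have e := (hasDerivAt_id y).mul (((had y hy0).inv ha0).add (((hbd y hy0).inv hb0).const_mul ε2))
    have e' : h = fun y => id y * ((a⁻¹ + fun y => ε2 * (b⁻¹) y) y) := by
      funext y; simp [h]
    rw [e']
    refine e.congr_deriv ?_
    simp only [h', id, Pi.add_apply, Pi.inv_apply]
    field_simp
    ring
  · exact (hainv.add (continuousOn_const.mul hbinv)).sub (((continuous_const.mul continuous_id).pow 2).continuousOn.mul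
      ((hainv.pow 3).add (continuousOn_const.mul (hbinv.pow 3))))
  · intro y hy
    simp only [h]
    rw [abs_mul, abs_of_pos (hpos y hy), mul_comm]
    exact mul_le_mul_of_nonneg_left (hlow y hy) (hpos y hy).le
  · intro y hy
    have hy0 := hpos y hy
    have ha0 := hap y hy0
    have hb0 := hbp y hy0
    have ga : γ * y ≤ a y := Real.le_sqrt_of_sq_le (by nlinarith)
    have gb : γ * y ≤ b y := Real.le_sqrt_of_sq_le (by nlinarith)
    have u := up_alg (1 / a y) (1 / b y) ε2 (γ * y) (by positivity) (by positivity) (by positivity)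
      (by rw [mul_one_div]; exact (div_le_one ha0).2 ga) (by rw [mul_one_div]; exact (div_le_one hb0).2 gb) hε2
    simp only [h', h]
    have l := hlow y hy
    set α := 1 / a y + ε2 * (1 / b y) with hα
    calc _ ≤ (4 * |α|) * (|α| * y ^ 2) := by gcongr
      _ = 4 * (y * α) ^ 2 := by rw [mul_pow, ← sq_abs α]; ring


lemma osc_line (γ : ℝ) (hγ : 0 < γ) (ψ : ℝ → ℝ) (hψ : IsCutoff ψ) (r R p z k0 ε2 K : ℝ)
    (hr : 0 < r) (hR : 1 ≤ R) (hp : |p| ≤ 2 * R) (hz : |z| ≤ 2 * R) (hz0 : z ≠ 0) (hk0 : k0 ≠ 0)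
    (hε2 : ε2 = 1 ∨ ε2 = -1)
    (hK : K = |k0 * γ ^ 2| * (4 * γ * |z| / (2 * ((1 + 4 * γ) * R) ^ 3))) :
    ‖∫ y, (Ps ψ r R p z y : ℂ) * Complex.exp (Complex.I * ((k0 * ph γ ε2 p z y : ℝ) : ℂ))‖
      ≤ 2 * (7 + 2 * ∫ x, |deriv ψ x|) / Real.sqrt K := by
  have hR0 : 0 < R := by linarith
  have hKpos : 0 < K := by
    have h1 := abs_pos.2 hz0
    have h2 : 0 < |k0 * γ ^ 2| := abs_pos.2 (mul_ne_zero hk0 (by positivity))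
    rw [hK]; positivity
  have hV : 0 ≤ ∫ x, |deriv ψ x| := integral_nonneg fun x => abs_nonneg _
  set V := ∫ x, |deriv ψ x| with hVdef
  set F : ℝ → ℂ := fun y => (Ps ψ r R p z y : ℂ) * Complex.exp (Complex.I * ((k0 * ph γ ε2 p z y : ℝ) : ℂ)) with hF
  have hFn : ∀ y, ‖F y‖ ≤ 1 := by
    intro y
    simp only [hF, norm_mul, Complex.norm_real]
    rw [mul_comm Complex.I, Complex.norm_exp_ofReal_mul_I, mul_one]
    exact Ps_abs_le ψ hψ r R p z y
  have hFc : Continuous F := by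
    have hψc : Continuous ψ := hψ.1.continuous
    have : Continuous (Ps ψ r R p z) := by unfold Ps; fun_prop
    have : Continuous (ph γ ε2 p z) := by unfold ph; fun_prop
    simp only [hF]; fun_prop
  have hFe : ∀ y, F y = F |y| := by
    intro y; simp only [hF, Ps, ph, sq_abs]
  have h1 : ∫ y, F y = 2 * ∫ y in Set.Ioi 0, F y := by
    have hcs : HasCompactSupport F := by
      apply HasCompactSupport.intro (K := Set.Icc (-(2 * R)) (2 * R)) isCompact_Icc
      intro y hy
      have : 2 * R ≤ |y| := by
        by_contra h
        exact hy (abs_le.1 (not_le.1 h).le)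
      simp only [hF, Ps_zero ψ hψ r R p z y hR0 (Or.inr (Or.inr this))]
      simp
    have hint : Integrable F := hFc.integrable_of_hasCompactSupport hcs
    have hev : ∫ y in Set.Iic 0, F y = ∫ y in Set.Ioi 0, F y := by
      have h3 := integral_comp_neg_Iic (0:ℝ) F
      rw [neg_zero] at h3
      rw [← h3]
      apply integral_congr_ae
      refine Filter.Eventually.of_forall fun y => ?_
      show F y = F (-y)
      rw [hFe y, hFe (-y), abs_neg]
    rw [← intervalIntegral.integral_Iic_add_Ioi (b := (0:ℝ)) hint.integrableOn hint.integrableOn, hev]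
    ring
  have h2 : ∫ y in Set.Ioi 0, F y = ∫ y in (0:ℝ)..(2 * R), F y := by
    rw [intervalIntegral.integral_of_le (by positivity)]
    apply setIntegral_eq_of_subset_of_forall_sdiff_eq_zero measurableSet_Ioi
    · exact fun y hy => hy.1
    · intro y hy
      have : 2 * R ≤ |y| := by
        have h0 : 0 < y := hy.1
        have h3 : ¬ (0 < y ∧ y ≤ 2 * R) := hy.2
        rw [abs_of_pos h0]
        by_contra h
        exact h3 ⟨h0, by linarith⟩
      simp only [hF, Ps_zero ψ hψ r R p z y hR0 (Or.inr (Or.inr this))]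
      simp
  have hs : 0 < Real.sqrt K := Real.sqrt_pos.2 hKpos
  set δ := 1 / Real.sqrt K with hδ
  have hδ0 : 0 < δ := by positivity
  have triv : ∀ c : ℝ, 0 ≤ c → ‖∫ y in (0:ℝ)..c, F y‖ ≤ c := by
    intro c hc
    have := intervalIntegral.norm_integral_le_of_norm_le_const (a := 0) (b := c) (f := F) (C := 1) fun y _ => hFn y
    simpa [abs_of_nonneg hc] using this
  have main : ‖∫ y in (0:ℝ)..(2 * R), F y‖ ≤ (7 + 2 * V) / Real.sqrt K := by
    have e : (7 + 2 * V) / Real.sqrt K = δ + (6 + 2 * V) / Real.sqrt K := by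
      rw [hδ, ← add_div]; congr 1; ring
    by_cases hc : δ ≤ 2 * R
    · rw [← intervalIntegral.integral_add_adjacent_intervals (b := δ) (hFc.intervalIntegrable _ _) (hFc.intervalIntegrable _ _), e]
      refine (norm_add_le _ _).trans (add_le_add (triv δ hδ0.le) ?_)
      have := osc_seg γ hγ ψ hψ r R p z k0 ε2 δ hr hR hp hz hz0 hk0 hε2 hδ0 hc
      rw [← hK] at this
      refine this.trans (le_of_eq ?_)
      congr 1
      rw [hδ]
      field_simp
      exact (Real.sq_sqrt hKpos.le).symm
    · refine (triv _ (by positivity)).trans ?_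
      have : 0 ≤ (6 + 2 * V) / Real.sqrt K := by positivity
      rw [e]; linarith
  rw [h1, h2, norm_mul]
  simp only [Complex.norm_ofNat]
  calc 2 * _ ≤ 2 * ((7 + 2 * V) / Real.sqrt K) := by gcongr
    _ = _ := by ring


lemma fub (G : ℝ → ℝ → ℝ → ℂ) (hG : Integrable (fun ξ : E3 => G (ξ 0) (ξ 2) (ξ 1))) :
    ∫ ξ : E3, G (ξ 0) (ξ 2) (ξ 1) = ∫ w : ℝ × ℝ, ∫ y, G w.1 w.2 y := by
  let e : E3 ≃ᵐ ℝ × (ℝ × ℝ) := ((MeasurableEquiv.toLp 2 (Fin 3 → ℝ)).symm.trans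
    (MeasurableEquiv.piFinSuccAbove (fun _ : Fin 3 => ℝ) 1)).trans
      (MeasurableEquiv.prodCongr (MeasurableEquiv.refl ℝ) MeasurableEquiv.finTwoArrow)
  have he : MeasurePreserving e volume volume := by
    have h1 := EuclideanSpace.volume_preserving_symm_measurableEquiv_toLp (Fin 3)
    have h2 := volume_preserving_piFinSuccAbove (fun _ : Fin 3 => ℝ) 1
    have h3 := (MeasurePreserving.id (volume : Measure ℝ)).prod (volume_preserving_finTwoArrow ℝ)
    exact h3.comp (h2.comp h1)
  have heq : ∀ ξ : E3, e ξ = (ξ 1, (ξ 0, ξ 2)) := fun ξ => rfl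
  have h4 : (fun ξ : E3 => G (ξ 0) (ξ 2) (ξ 1)) = (fun u : ℝ × (ℝ × ℝ) => G u.2.1 u.2.2 u.1) ∘ e := by
    funext ξ; simp [heq]
  have hI : Integrable (fun u : ℝ × (ℝ × ℝ) => G u.2.1 u.2.2 u.1) volume := by
    rw [h4] at hG
    exact (he.integrable_comp_emb e.measurableEmbedding).1 hG
  rw [h4]
  have := he.integral_comp e.measurableEmbedding (fun u : ℝ × (ℝ × ℝ) => G u.2.1 u.2.2 u.1)
  refine Eq.trans this ?_
  rw [Measure.volume_eq_prod, integral_prod_symm]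
  exact hI

lemma abs_rpow_int (c : ℝ) (hc : 0 < c) :
    Integrable (fun z : ℝ => (Set.Iic c).indicator (fun s : ℝ => s ^ (-(1:ℝ)/2)) |z|) ∧
    ∫ z : ℝ, (Set.Iic c).indicator (fun s : ℝ => s ^ (-(1:ℝ)/2)) |z| = 4 * Real.sqrt c := by
  constructor
  · have h0 : (fun z : ℝ => (Set.Iic c).indicator (fun s : ℝ => s ^ (-(1:ℝ)/2)) |z|)
        = (Set.Icc (-c) c).indicator (fun z : ℝ => ‖(z : ℂ) ^ (((-(1:ℝ)/2 : ℝ)) : ℂ)‖) := by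
      funext z
      by_cases hz : |z| ≤ c
      · rw [Set.indicator_of_mem (by exact hz), Set.indicator_of_mem (by exact abs_le.1 hz)]
        by_cases hz0 : z = 0
        · subst hz0
          simp
        · rw [Complex.norm_cpow_real]; simp
      · rw [Set.indicator_of_notMem (by exact hz), Set.indicator_of_notMem (by intro h; exact hz (abs_le.2 h))]
    rw [h0, integrable_indicator_iff measurableSet_Icc, integrableOn_Icc_iff_integrableOn_Ioc,
      ← intervalIntegrable_iff_integrableOn_Ioc_of_le (by linarith)]
    exact (intervalIntegral.intervalIntegrable_cpow' (by simp; norm_num)).norm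
  · rw [integral_comp_abs (f := (Set.Iic c).indicator (fun s : ℝ => s ^ (-(1:ℝ)/2))),
      setIntegral_indicator measurableSet_Iic, Set.Ioi_inter_Iic,
      ← intervalIntegral.integral_of_le hc.le, integral_rpow (by left; norm_num)]
    norm_num
    rw [Real.sqrt_eq_rpow]; ring

lemma ex_rot (x : E3) : ∃ (L : E3 ≃ₗᵢ[ℝ] E3) (ρ : ℝ), (∀ η, (L η) 2 = η 2) ∧
    (∀ η, (L η) 0 ^ 2 + (L η) 1 ^ 2 = η 0 ^ 2 + η 1 ^ 2) ∧
    (∀ η, inner ℝ (L η) x = ρ * η 0 + x 2 * η 2) := by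
  obtain ⟨c, s, ρ, hcs, h0, h1⟩ : ∃ c s ρ : ℝ, c ^ 2 + s ^ 2 = 1 ∧ x 0 = ρ * c ∧ x 1 = ρ * s := by
    by_cases h : x 0 ^ 2 + x 1 ^ 2 = 0
    · refine ⟨1, 0, 0, by norm_num, ?_, ?_⟩ <;> nlinarith
    · have hp : 0 < x 0 ^ 2 + x 1 ^ 2 := lt_of_le_of_ne (by positivity) (Ne.symm h)
      have hs := Real.sqrt_pos.2 hp
      refine ⟨x 0 / Real.sqrt (x 0 ^ 2 + x 1 ^ 2), x 1 / Real.sqrt (x 0 ^ 2 + x 1 ^ 2), Real.sqrt (x 0 ^ 2 + x 1 ^ 2), ?_, ?_, ?_⟩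
      · rw [div_pow, div_pow, Real.sq_sqrt hp.le, ← add_div, div_self h]
      · field_simp
      · field_simp
  let l : E3 →ₗ[ℝ] E3 :=
    { toFun := fun η => !₂[c * η 0 - s * η 1, s * η 0 + c * η 1, η 2]
      map_add' := by
        intro a b; ext i; fin_cases i <;> simp <;> ring
      map_smul' := by
        intro a b; ext i; fin_cases i <;> simp <;> ring }
  have l0 : ∀ η, (l η) 0 = c * η 0 - s * η 1 := fun η => rfl
  have l1 : ∀ η, (l η) 1 = s * η 0 + c * η 1 := fun η => rfl
  have l2 : ∀ η, (l η) 2 = η 2 := fun η => rfl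
  have hsq : ∀ η, (l η) 0 ^ 2 + (l η) 1 ^ 2 = η 0 ^ 2 + η 1 ^ 2 := by
    intro η
    rw [l0, l1]
    linear_combination (η 0 ^ 2 + η 1 ^ 2) * hcs
  let li : E3 →ₗᵢ[ℝ] E3 := ⟨l, by
    intro η
    rw [EuclideanSpace.norm_eq, EuclideanSpace.norm_eq]
    simp only [Fin.sum_univ_three, Real.norm_eq_abs, sq_abs]
    rw [hsq, l2]⟩
  refine ⟨li.toLinearIsometryEquiv rfl, ρ, l2, hsq, ?_⟩
  intro η
  rw [LinearIsometry.coe_toLinearIsometryEquiv]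
  show inner ℝ (l η) x = _
  rw [PiLp.inner_apply]
  simp only [Fin.sum_univ_three, l0, l1, l2, h0, h1]
  simp
  linear_combination (ρ * η 0) * hcs


/-- The multiplier. -/
def mult (ψ : ℝ → ℝ) (r R γ ε1 ε2 τ : ℝ) (ξ : E3) : ℂ :=
  ((Psi ψ r R ξ : ℝ) : ℂ) * Complex.exp ((τ : ℂ) * lamEV γ ε1 ε2 ξ)

lemma e3_norm (ξ : E3) : ‖ξ‖ = Real.sqrt (ξ 0 ^ 2 + ξ 2 ^ 2 + ξ 1 ^ 2) := by
  rw [EuclideanSpace.norm_eq]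
  simp only [Fin.sum_univ_three, Real.norm_eq_abs, sq_abs]
  congr 1; ring

lemma mult_eq (ψ : ℝ → ℝ) (r R γ ε1 ε2 τ : ℝ) (ξ : E3) :
    mult ψ r R γ ε1 ε2 τ ξ = (Ps ψ r R (ξ 0) (ξ 2) (ξ 1) : ℂ) *
      Complex.exp (Complex.I * ((ε1 * τ / 2 * ph γ ε2 (ξ 0) (ξ 2) (ξ 1) : ℝ) : ℂ)) := by
  have h2 : ‖ξ‖ ^ 2 = ξ 0 ^ 2 + ξ 2 ^ 2 + ξ 1 ^ 2 := by
    rw [e3_norm, Real.sq_sqrt (by positivity)]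
  unfold mult lamEV Psi Ps ph xih
  rw [h2, e3_norm]
  congr 2
  push_cast
  ring

lemma mult_norm (ψ : ℝ → ℝ) (hψ : IsCutoff ψ) (r R γ ε1 ε2 τ : ℝ) (ξ : E3) :
    ‖mult ψ r R γ ε1 ε2 τ ξ‖ ≤ 1 := by
  rw [mult_eq, norm_mul, Complex.norm_real, mul_comm Complex.I, Complex.norm_exp_ofReal_mul_I, mul_one]
  exact Ps_abs_le ψ hψ r R _ _ _

lemma mult_cont (ψ : ℝ → ℝ) (hψ : IsCutoff ψ) (r R γ ε1 ε2 τ : ℝ) :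
    Continuous (mult ψ r R γ ε1 ε2 τ) := by
  have hψc : Continuous ψ := hψ.1.continuous
  have : Continuous (Psi ψ r R) := by unfold Psi xih; fun_prop
  have : Continuous (lamEV γ ε1 ε2) := by unfold lamEV; fun_prop
  unfold mult; fun_prop

lemma mult_zero (ψ : ℝ → ℝ) (hψ : IsCutoff ψ) (r R γ ε1 ε2 τ : ℝ) (hR : 0 < R) (ξ : E3)
    (h : ξ ∉ Metric.closedBall (0 : E3) (2 * R)) : mult ψ r R γ ε1 ε2 τ ξ = 0 := by
  unfold mult Psi
  rw [hψ.2.2.2 (‖ξ‖ / R)]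
  · simp
  · rw [mem_closedBall_zero_iff, not_le] at h
    rw [le_div_iff₀ hR]; exact h.le

lemma mult_int (ψ : ℝ → ℝ) (hψ : IsCutoff ψ) (r R γ ε1 ε2 τ : ℝ) (hR : 0 < R) :
    Integrable (mult ψ r R γ ε1 ε2 τ) :=
  (mult_cont ψ hψ r R γ ε1 ε2 τ).integrable_of_hasCompactSupport
    (HasCompactSupport.intro (isCompact_closedBall (0 : E3) (2 * R)) (mult_zero ψ hψ r R γ ε1 ε2 τ hR))

lemma ker_triv (ψ : ℝ → ℝ) (hψ : IsCutoff ψ) (r R γ ε1 ε2 τ : ℝ) (hR : 0 < R) (x : E3) :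
    ‖FTinv (mult ψ r R γ ε1 ε2 τ) x‖ ≤ 8 * (volume (Metric.ball (0 : E3) 1)).toReal * R ^ 3 := by
  unfold FTinv
  rw [Real.fourierInv_eq]
  refine (norm_integral_le_integral_norm _).trans ?_
  simp only [Circle.norm_smul]
  rw [← setIntegral_eq_integral_of_forall_compl_eq_zero (s := Metric.closedBall (0 : E3) (2 * R))
    (fun ξ hξ => by rw [mult_zero ψ hψ r R γ ε1 ε2 τ hR ξ hξ, norm_zero])]
  refine (le_abs_self _).trans ?_
  rw [← Real.norm_eq_abs]
  refine (norm_setIntegral_le_of_norm_le_const (C := 1) ?_ ?_).trans ?_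
  · exact measure_closedBall_lt_top
  · intro ξ _; rw [norm_norm]; exact mult_norm ψ hψ r R γ ε1 ε2 τ ξ
  · rw [Measure.real, Measure.addHaar_closedBall _ _ (by positivity), ENNReal.toReal_mul,
      ENNReal.toReal_ofReal (by positivity)]
    simp only [finrank_euclideanSpace, Fintype.card_fin]
    apply le_of_eq; ring

lemma ker_decay (γ : ℝ) (hγ : 0 < γ) (ψ : ℝ → ℝ) (hψ : IsCutoff ψ) (r R ε1 ε2 τ : ℝ)
    (hr : 0 < r) (hR : 1 ≤ R) (hε1 : ε1 = 1 ∨ ε1 = -1) (hε2 : ε2 = 1 ∨ ε2 = -1) (hτ : 0 < τ) (x : E3) :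
    ‖FTinv (mult ψ r R γ ε1 ε2 τ) x‖ ≤
      (32 * Real.sqrt 2 * (7 + 2 * ∫ x, |deriv ψ x|) / Real.sqrt (γ ^ 3 / (1 + 4 * γ) ^ 3)) * R ^ 3 / Real.sqrt τ := by
  have hR0 : 0 < R := by linarith
  have hV : 0 ≤ ∫ x, |deriv ψ x| := integral_nonneg fun x => abs_nonneg _
  set V := ∫ x, |deriv ψ x| with hVdef
  obtain ⟨L, ρ, hL2, hLh, hLx⟩ := ex_rot x
  set k0 := ε1 * τ / 2 with hk0
  have hk0' : |k0| = τ / 2 := by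
    rw [hk0]; rcases hε1 with rfl | rfl
    · rw [one_mul, abs_of_pos (by positivity)]
    · rw [neg_one_mul, neg_div, abs_neg, abs_of_pos (by positivity)]
  have hk0n : k0 ≠ 0 := by
    rw [← abs_pos, hk0']; positivity
  unfold FTinv
  rw [Real.fourierInv_eq]
  rw [← L.measurePreserving.integral_comp L.toHomeomorph.measurableEmbedding]
  have hLm : ∀ η, mult ψ r R γ ε1 ε2 τ (L η) = mult ψ r R γ ε1 ε2 τ η := by
    intro η
    unfold mult Psi lamEV xih
    rw [hL2, hLh, L.norm_map]
  set G : ℝ → ℝ → ℝ → ℂ := fun p z y => Complex.exp ((2 * π * (ρ * p + x 2 * z) : ℝ) * Complex.I) *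
    ((Ps ψ r R p z y : ℂ) * Complex.exp (Complex.I * ((k0 * ph γ ε2 p z y : ℝ) : ℂ))) with hG
  have hfun : (fun η : E3 => (Real.fourierChar (inner ℝ (L η) x)) • mult ψ r R γ ε1 ε2 τ (L η))
      = fun η => G (η 0) (η 2) (η 1) := by
    funext η
    rw [hLm, hLx, mult_eq, Circle.smul_def, Real.fourierChar_apply]
    rfl
  have hGi : Integrable (fun η : E3 => G (η 0) (η 2) (η 1)) := by
    rw [← hfun]
    simp only [hLm]
    have hm := mult_int ψ hψ r R γ ε1 ε2 τ hR0
    refine hm.mono ?_ ?_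
    · apply Continuous.aestronglyMeasurable
      have h1 := mult_cont ψ hψ r R γ ε1 ε2 τ
      have h2 : Continuous fun η : E3 => Real.fourierChar (inner ℝ (L η) x) :=
        Real.continuous_fourierChar.comp (by fun_prop)
      exact h2.smul h1
    · filter_upwards with η
      rw [Circle.norm_smul]
  rw [hfun, fub G hGi]
  set B := Real.sqrt (γ ^ 3 / (1 + 4 * γ) ^ 3) with hB
  have hBpos : 0 < B := Real.sqrt_pos.2 (by positivity)
  set A := 2 * (7 + 2 * V) / B * Real.sqrt (R ^ 3) / Real.sqrt τ with hA
  have hA0 : 0 ≤ A := by positivity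
  obtain ⟨hzi, hzv⟩ := abs_rpow_int (2 * R) (by positivity)
  set h := fun z : ℝ => (Set.Iic (2 * R)).indicator (fun s : ℝ => s ^ (-(1:ℝ)/2)) |z| with hh
  set g := (Set.Icc (-(2 * R)) (2 * R)).indicator (fun _ : ℝ => A) with hg
  have hgi : Integrable g := by
    rw [hg, integrable_indicator_iff measurableSet_Icc]
    exact integrableOn_const (by simp)
  have hgv : ∫ p, g p = 4 * R * A := by
    rw [hg, integral_indicator measurableSet_Icc, setIntegral_const]
    simp
    left
    rw [max_eq_left (by linarith)]
    ring
  have hinner : ∀ w : ℝ × ℝ, ‖∫ y, G w.1 w.2 y‖ ≤ g w.1 * h w.2 := by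
    rintro ⟨p, z⟩
    simp only [hG]
    rw [integral_const_mul, norm_mul, Complex.norm_exp_ofReal_mul_I, one_mul]
    have hgn : 0 ≤ g p * h z := by
      apply mul_nonneg
      · exact Set.indicator_nonneg (fun _ _ => hA0) _
      · exact Set.indicator_apply_nonneg fun _ => Real.rpow_nonneg (abs_nonneg z) _
    by_cases hp : |p| ≤ 2 * R
    swap
    · have : ∀ y, Ps ψ r R p z y = 0 := fun y => Ps_zero ψ hψ r R p z y hR0 (Or.inl (not_le.1 hp).le)
      simp only [this]; simpa using hgn
    by_cases hz : |z| ≤ 2 * R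
    swap
    · have : ∀ y, Ps ψ r R p z y = 0 := fun y => Ps_zero ψ hψ r R p z y hR0 (Or.inr (Or.inl (not_le.1 hz).le))
      simp only [this]; simpa using hgn
    by_cases hz0 : z = 0
    · have : ∀ y, Ps ψ r R p z y = 0 := fun y => by
        subst hz0; unfold Ps; rw [hψ.2.2.1 (|0| / r) (by simp)]; simp
      simp only [this]; simpa using hgn
    refine (osc_line γ hγ ψ hψ r R p z k0 ε2 _ hr hR hp hz hz0 hk0n hε2 rfl).trans ?_
    have eg : g p = A := by rw [hg]; exact Set.indicator_of_mem (s := Set.Icc (-(2 * R)) (2 * R)) (abs_le.1 hp) (fun _ : ℝ => A)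
    have eh : h z = 1 / Real.sqrt |z| := by
      rw [hh]; simp only
      rw [Set.indicator_of_mem (by exact hz), Real.sqrt_eq_rpow, one_div, ← Real.rpow_neg (abs_nonneg z)]
      norm_num
    have hz1 : 0 < |z| := abs_pos.2 hz0
    have eK : |k0 * γ ^ 2| * (4 * γ * |z| / (2 * ((1 + 4 * γ) * R) ^ 3)) = (γ ^ 3 / (1 + 4 * γ) ^ 3) * τ * |z| / R ^ 3 := by
      rw [abs_mul, hk0', abs_of_pos (by positivity : 0 < γ ^ 2)]
      field_simp
      ring
    rw [eg, eh, eK, Real.sqrt_div (by positivity), Real.sqrt_mul (by positivity), Real.sqrt_mul (by positivity), ← hB, hA]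
    have s1 : 0 < Real.sqrt τ := Real.sqrt_pos.2 hτ
    have s2 : 0 < Real.sqrt |z| := Real.sqrt_pos.2 hz1
    have s3 : 0 < Real.sqrt (R ^ 3) := Real.sqrt_pos.2 (by positivity)
    apply le_of_eq
    rw [← hVdef]
    field_simp
  have hgh : Integrable (fun w : ℝ × ℝ => g w.1 * h w.2) := by
    rw [Measure.volume_eq_prod]; exact hgi.mul_prod hzi
  refine (norm_integral_le_of_norm_le hgh (Filter.Eventually.of_forall hinner)).trans ?_
  rw [Measure.volume_eq_prod, integral_prod_mul, hgv]
  have hzv' : ∫ z, h z = 4 * Real.sqrt (2 * R) := hzv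
  rw [hzv', hA, Real.sqrt_mul (by norm_num)]
  have e3 : Real.sqrt (R ^ 3) = R * Real.sqrt R := by
    rw [show R ^ 3 = R ^ 2 * R by ring, Real.sqrt_mul (by positivity), Real.sqrt_sq hR0.le]
  have e4 : Real.sqrt R * Real.sqrt R = R := Real.mul_self_sqrt hR0.le
  apply le_of_eq
  rw [e3]
  calc _ = 32 * Real.sqrt 2 * (7 + 2 * V) / B * (R ^ 2 * (Real.sqrt R * Real.sqrt R)) / Real.sqrt τ := by ring
    _ = _ := by rw [e4]; ring


lemma lint_eq (f : E3 → ℂ) (p : ℝ) (hp : 0 < p) :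
    ∫⁻ x, ENNReal.ofReal (‖f x‖ ^ p) = (eLpNorm f (ENNReal.ofReal p) volume) ^ p := by
  rw [eLpNorm_eq_lintegral_rpow_enorm_toReal (by simpa using hp) ENNReal.ofReal_ne_top, ENNReal.toReal_ofReal hp.le,
    ← ENNReal.rpow_mul, one_div, inv_mul_cancel₀ hp.ne', ENNReal.rpow_one]
  apply lintegral_congr
  intro x
  rw [← ENNReal.ofReal_rpow_of_nonneg (norm_nonneg _) hp.le, ofReal_norm]

lemma lint_eq2 (f : E3 → ℂ) :
    ∫⁻ x, ENNReal.ofReal (‖f x‖ ^ 2) = (eLpNorm f 2 volume) ^ (2:ℝ) := by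
  have := lint_eq f 2 (by norm_num)
  simpa using this

lemma FT_cont (f : E3 → ℂ) (hf : Integrable f) : Continuous (FT f) :=
  VectorFourier.fourierIntegral_continuous Real.continuous_fourierChar
    (by simpa using (continuous_inner : Continuous fun p : E3 × E3 => inner ℝ p.1 p.2)) hf

lemma FTinv_cont (f : E3 → ℂ) (hf : Integrable f) : Continuous (FTinv f) := by
  unfold FTinv
  have : FourierTransformInv.fourierInv f = fun w => FourierTransform.fourier f (-w) := by
    funext w; exact Real.fourierInv_eq_fourier_neg f w
  rw [this]
  exact (FT_cont f hf).comp continuous_neg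

lemma FT_add (f g : E3 → ℂ) (hf : Integrable f) (hg : Integrable g) : FT (f + g) = FT f + FT g :=
  VectorFourier.fourierIntegral_add Real.continuous_fourierChar
    (by simpa using (continuous_inner : Continuous fun p : E3 × E3 => inner ℝ p.1 p.2)) hf hg

lemma FTinv_add (f g : E3 → ℂ) (hf : Integrable f) (hg : Integrable g) :
    FTinv (f + g) = FTinv f + FTinv g := by
  funext x
  simp only [FTinv, Pi.add_apply, Real.fourierInv_eq_fourier_neg]
  exact congrFun (FT_add f g hf hg) (-x)

lemma FTf_eq (f g : E3 → ℂ) (hf : Integrable f) (hg : Integrable g) :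
    ∫ ξ, FT f ξ * g ξ = ∫ x, f x * FT g x := by
  have := VectorFourier.integral_fourierIntegral_smul_eq_flip (e := Real.fourierChar) (μ := (volume : Measure E3))
    (ν := (volume : Measure E3)) (L := innerₗ E3) (f := f) (g := g) Real.continuous_fourierChar
    (by simpa using (continuous_inner : Continuous fun p : E3 × E3 => inner ℝ p.1 p.2)) hf hg
  rw [flip_innerₗ] at this
  exact this

section op
variable (γ : ℝ) (hγ : 0 < γ) (ψ : ℝ → ℝ) (hψ : IsCutoff ψ) (r R ε1 ε2 ε t : ℝ)

lemma PsiG_eq (f : E3 → ℂ) : PsiG ψ r R γ ε1 ε2 ε t f =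
    FTinv (fun ξ => mult ψ r R γ ε1 ε2 (t / ε) ξ * FT f ξ) := rfl

lemma mF_cont (ψ : ℝ → ℝ) (hψ : IsCutoff ψ) (τ : ℝ) (f : E3 → ℂ) (hf : Integrable f) :
    Continuous (fun ξ => mult ψ r R γ ε1 ε2 τ ξ * FT f ξ) :=
  (mult_cont ψ hψ r R γ ε1 ε2 τ).mul (FT_cont f hf)

lemma mF_int (ψ : ℝ → ℝ) (hψ : IsCutoff ψ) (R τ : ℝ) (hR : 0 < R) (f : E3 → ℂ) (hf : Integrable f) :
    Integrable (fun ξ => mult ψ r R γ ε1 ε2 τ ξ * FT f ξ) :=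
  (mF_cont γ r R ε1 ε2 ψ hψ τ f hf).integrable_of_hasCompactSupport
    (HasCompactSupport.intro (isCompact_closedBall (0 : E3) (2 * R))
      (fun ξ hξ => by rw [mult_zero ψ hψ r R γ ε1 ε2 τ hR ξ hξ, zero_mul]))

lemma mF_L2 (ψ : ℝ → ℝ) (hψ : IsCutoff ψ) (R τ : ℝ) (f : E3 → ℂ) (hf : Integrable f)
    (h2 : MemLp f 2 volume) :
    eLpNorm (fun ξ => mult ψ r R γ ε1 ε2 τ ξ * FT f ξ) 2 volume ≤ eLpNorm f 2 volume := by
  rw [← plancherel f hf h2]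
  apply eLpNorm_mono
  intro ξ
  rw [norm_mul]
  exact mul_le_of_le_one_left (norm_nonneg _) (mult_norm ψ hψ r R γ ε1 ε2 τ ξ)

lemma T_L2 (ψ : ℝ → ℝ) (hψ : IsCutoff ψ) (R τ : ℝ) (hR : 0 < R) (f : E3 → ℂ) (hf : Integrable f)
    (h2 : MemLp f 2 volume) :
    eLpNorm (FTinv fun ξ => mult ψ r R γ ε1 ε2 τ ξ * FT f ξ) 2 volume ≤ eLpNorm f 2 volume := by
  have h := mF_L2 γ r ε1 ε2 ψ hψ R τ f hf h2
  rw [plancherel_inv _ (mF_int γ r ε1 ε2 ψ hψ R τ hR f hf)]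
  · exact h
  · exact ⟨(mF_cont γ r R ε1 ε2 ψ hψ τ f hf).aestronglyMeasurable, h.trans_lt h2.2⟩

lemma T_sup (ψ : ℝ → ℝ) (hψ : IsCutoff ψ) (R τ : ℝ) (hR : 0 < R) (M : ℝ)
    (hM : ∀ x, ‖FTinv (mult ψ r R γ ε1 ε2 τ) x‖ ≤ M) (f : E3 → ℂ) (hf : Integrable f) (x : E3) :
    ‖FTinv (fun ξ => mult ψ r R γ ε1 ε2 τ ξ * FT f ξ) x‖ ≤ M * ∫ y, ‖f y‖ := by
  set m := mult ψ r R γ ε1 ε2 τ with hm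
  have hmi : Integrable m := mult_int ψ hψ r R γ ε1 ε2 τ hR
  set g : E3 → ℂ := fun ξ => Real.fourierChar (inner ℝ ξ x) • m ξ with hg
  have hgi : Integrable g := by
    refine hmi.mono ?_ ?_
    · apply Continuous.aestronglyMeasurable
      have h2 : Continuous fun η : E3 => Real.fourierChar (inner ℝ η x) :=
        Real.continuous_fourierChar.comp (by fun_prop)
      exact h2.smul (mult_cont ψ hψ r R γ ε1 ε2 τ)
    · filter_upwards with η
      rw [Circle.norm_smul]
  have e1 : FTinv (fun ξ => m ξ * FT f ξ) x = ∫ y, f y * FT g y := by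
    rw [← FTf_eq f g hf hgi]
    unfold FTinv
    rw [Real.fourierInv_eq]
    apply integral_congr_ae
    filter_upwards with ξ
    simp only [hg, Circle.smul_def, smul_eq_mul]
    ring
  have e2 : ∀ y, FT g y = FTinv m (x - y) := by
    intro y
    unfold FT FTinv
    rw [Real.fourierInv_eq, Real.fourier_eq]
    apply integral_congr_ae
    filter_upwards with ξ
    simp only [hg]
    rw [smul_smul, ← AddChar.map_add_eq_mul, inner_sub_right]
    congr 2
    ring
  rw [e1]
  rw [← integral_const_mul]
  refine norm_integral_le_of_norm_le (hf.norm.const_mul M) ?_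
  filter_upwards with y
  rw [norm_mul, e2, mul_comm]
  exact mul_le_mul_of_nonneg_right (hM _) (norm_nonneg _)

end op


lemma FT_nonint (f : E3 → ℂ) (hf : ¬ Integrable f) : FT f = 0 := by
  funext w
  unfold FT
  rw [Real.fourier_eq, Pi.zero_apply]
  apply integral_undef
  intro h
  apply hf
  exact (VectorFourier.fourierIntegral_convergent_iff (μ := (volume : Measure E3)) (L := innerₗ E3) Real.continuous_fourierChar
    (by simpa using (continuous_inner : Continuous fun p : E3 × E3 => inner ℝ p.1 p.2)) w).1 h

lemma FT_congr (f g : E3 → ℂ) (h : f =ᵐ[volume] g) : FT f = FT g := by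
  funext w
  unfold FT
  rw [Real.fourier_eq, Real.fourier_eq]
  apply integral_congr_ae
  filter_upwards [h] with v hv
  rw [hv]

lemma ker_total (γ : ℝ) (hγ : 0 < γ) (ψ : ℝ → ℝ) (hψ : IsCutoff ψ) : ∃ C0 : ℝ, 1 ≤ C0 ∧
    ∀ r R ε : ℝ, 0 < r → r ≤ 1 → 1 ≤ R → 0 < ε →
      ∀ ε1 ε2 : ℝ, (ε1 = 1 ∨ ε1 = -1) → (ε2 = 1 ∨ ε2 = -1) →
      ∀ t : ℝ, 0 < t → ∀ x, ‖FTinv (mult ψ r R γ ε1 ε2 (t / ε)) x‖ ≤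
        C0 * (R ^ 3 * min 1 (r ^ (-(2:ℝ)) * (ε / t) ^ ((1:ℝ)/2))) := by
  have hV : 0 ≤ ∫ x, |deriv ψ x| := integral_nonneg fun x => abs_nonneg _
  set A := 8 * (volume (Metric.ball (0 : E3) 1)).toReal with hA
  set D := 32 * Real.sqrt 2 * (7 + 2 * ∫ x, |deriv ψ x|) / Real.sqrt (γ ^ 3 / (1 + 4 * γ) ^ 3) with hD
  have hA0 : 0 ≤ A := by positivity
  have hD0 : 0 ≤ D := by positivity
  refine ⟨1 + A + D, by linarith, ?_⟩
  intro r R ε hr hr1 hR hε ε1 ε2 hε1 hε2 t ht x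
  have hR0 : 0 < R := by linarith
  have h1 := ker_triv ψ hψ r R γ ε1 ε2 (t / ε) hR0 x
  have h2 := ker_decay γ hγ ψ hψ r R ε1 ε2 (t / ε) hr hR hε1 hε2 (by positivity) x
  rw [← hA] at h1
  rw [← hD] at h2
  have hR3 : 0 < R ^ 3 := by positivity
  have hr2 : 1 ≤ r ^ (-(2:ℝ)) := Real.one_le_rpow_of_pos_of_le_one_of_nonpos hr hr1 (by norm_num)
  have hs : 1 / Real.sqrt (t / ε) = (ε / t) ^ ((1:ℝ)/2) := by
    rw [← Real.sqrt_eq_rpow, one_div, ← Real.sqrt_inv, inv_div]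
  have hs0 : 0 ≤ (ε / t) ^ ((1:ℝ)/2) := by positivity
  rcases min_choice 1 (r ^ (-(2:ℝ)) * (ε / t) ^ ((1:ℝ)/2)) with h | h
  · rw [h]
    refine h1.trans ?_
    rw [mul_one]
    exact mul_le_mul_of_nonneg_right (by linarith) hR3.le
  · rw [h]
    refine h2.trans ?_
    rw [div_eq_mul_one_div, hs, mul_assoc]
    have : (ε / t) ^ ((1:ℝ)/2) ≤ r ^ (-(2:ℝ)) * (ε / t) ^ ((1:ℝ)/2) := le_mul_of_one_le_left hs0 hr2
    have hDD : D ≤ 1 + A + D := by linarith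
    gcongr

lemma main_mid (γ : ℝ) (ψ : ℝ → ℝ) (hψ : IsCutoff ψ) (r R ε1 ε2 τ : ℝ) (hR : 0 < R) (M : ℝ) (hM : 0 < M)
    (hK : ∀ x, ‖FTinv (mult ψ r R γ ε1 ε2 τ) x‖ ≤ M) (p q : ℝ) (hp : 0 < p) (hq : 2 < q)
    (hpq : 1 / q + 1 / p = 1) (f : E3 → ℂ) (hfm : Measurable f) (hf : Integrable f)
    (hfp : MemLp f (ENNReal.ofReal p) volume) :
    eLpNorm (FTinv fun ξ => mult ψ r R γ ε1 ε2 τ ξ * FT f ξ) (ENNReal.ofReal q) volume ≤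
      ENNReal.ofReal (2 * M ^ (1 - 2 / q)) * eLpNorm f (ENNReal.ofReal p) volume := by
  have hq0 : 0 < q := by linarith
  have hpq' : (p - 1) * (q - 1) = 1 := by
    field_simp at hpq
    linarith
  have hI : Integrable (fun x => ‖f x‖ ^ p) := by
    have := hfp.integrable_norm_rpow (by simpa using hp) ENNReal.ofReal_ne_top
    rwa [ENNReal.toReal_ofReal hp.le] at this
  have hI0 : 0 ≤ ∫ x, ‖f x‖ ^ p := integral_nonneg fun x => by positivity
  have key := interp_core (fun f => FTinv fun ξ => mult ψ r R γ ε1 ε2 τ ξ * FT f ξ) M hM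
    (by
      intro f g hf hg
      rw [← FTinv_add _ _ (mF_int γ r ε1 ε2 ψ hψ R τ hR f hf) (mF_int γ r ε1 ε2 ψ hψ R τ hR g hg)]
      congr 1
      funext ξ
      rw [FT_add f g hf hg]
      simp only [Pi.add_apply]
      ring)
    (by
      intro f hf
      exact (FTinv_cont _ (mF_int γ r ε1 ε2 ψ hψ R τ hR f hf)).measurable)
    (by
      intro f hf x
      exact T_sup γ r ε1 ε2 ψ hψ R τ hR M hK f hf x)
    (by
      intro f hf
      rw [lint_eq2, lint_eq2]
      by_cases h2 : MemLp f 2 volume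
      · exact ENNReal.rpow_le_rpow (T_L2 γ r ε1 ε2 ψ hψ R τ hR f hf h2) (by norm_num)
      · have : eLpNorm f 2 volume = ⊤ := by
          by_contra h
          exact h2 ⟨hf.1, lt_top_iff_ne_top.2 h⟩
        rw [this]; simp)
    p q hq hpq' f hfm hf hI
  rw [lint_eq _ q hq0] at key
  have hIf := lint_eq f p hp
  rw [← ofReal_integral_eq_lintegral_ofReal hI (Filter.Eventually.of_forall fun x => by positivity)] at hIf
  set J := ∫ x, ‖f x‖ ^ p with hJ
  have e1 : eLpNorm f (ENNReal.ofReal p) volume = ENNReal.ofReal (J ^ (1 / p)) := by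
    rw [← ENNReal.ofReal_rpow_of_nonneg hI0 (by positivity), hIf, ← ENNReal.rpow_mul, mul_one_div_cancel hp.ne',
      ENNReal.rpow_one]
  have e2 := ENNReal.rpow_le_rpow key (by positivity : 0 ≤ 1 / q)
  rw [← ENNReal.rpow_mul, mul_one_div_cancel hq0.ne', ENNReal.rpow_one,
    ENNReal.ofReal_rpow_of_nonneg (by positivity) (by positivity)] at e2
  refine e2.trans (le_of_eq ?_)
  rw [e1, ← ENNReal.ofReal_mul (by positivity)]
  congr 1
  rw [Real.mul_rpow (by positivity) (by positivity), Real.mul_rpow (by positivity) (by positivity),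
    ← Real.rpow_mul (by norm_num), ← Real.rpow_mul hM.le, ← Real.rpow_mul hI0, mul_one_div_cancel hq0.ne', Real.rpow_one,
    mul_assoc]
  have e3 : (q - 1) * (1 / q) = 1 / p := by
    field_simp at hpq ⊢
    linarith
  have e4 : (q - 2) * (1 / q) = 1 - 2 / q := by field_simp
  rw [e3, e4]

/-- For `q ∈ [2,∞]`, `q̄ ∈ [1,2]` with `1/q + 1/q̄ = 1`:
`‖Ψ_{r,R}(D)G_λ(t)f‖_{L^q} ≤ C [R³ min{1, r^{−2}(ε/t)^{1/2}}]^{1−2/q} ‖f‖_{L^q̄}`,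
with `C` depending only on `γ̄` and `ψ`. -/
theorem dispersive_interpolated (γ : ℝ) (hγ : 0 < γ) (ψ : ℝ → ℝ) (hψ : IsCutoff ψ) :
    ∃ C : ℝ, 0 < C ∧
      ∀ q qbar : ℝ≥0∞, 2 ≤ q → 1 ≤ qbar → qbar ≤ 2 → 1/q + 1/qbar = 1 →
      ∀ r R ε : ℝ, 0 < r → r ≤ 1 → 1 ≤ R → 0 < ε →
      ∀ ε1 ε2 : ℝ, (ε1 = 1 ∨ ε1 = -1) → (ε2 = 1 ∨ ε2 = -1) →
      ∀ t : ℝ, 0 < t →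
      ∀ f : E3 → ℂ, MemLp f qbar volume →
        eLpNorm (PsiG ψ r R γ ε1 ε2 ε t f) q volume ≤
          ENNReal.ofReal (C * (R ^ 3 * min 1 (r ^ (-(2:ℝ)) * (ε / t) ^ ((1:ℝ)/2)))
              ^ (1 - 2 / q.toReal)) * eLpNorm f qbar volume := by
  obtain ⟨C0, hC0, hker⟩ := ker_total γ hγ ψ hψ
  refine ⟨2 * C0, by linarith, ?_⟩
  intro q qbar hq hqb1 hqb2 hqq r R ε hr hr1 hR hε ε1 ε2 hε1 hε2 t ht f0 hf0
  have hR0 : 0 < R := by linarith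
  have hN : 0 < R ^ 3 * min 1 (r ^ (-(2:ℝ)) * (ε / t) ^ ((1:ℝ)/2)) := by positivity
  have hK := hker r R ε hr hr1 hR hε ε1 ε2 hε1 hε2 t ht
  set N := R ^ 3 * min 1 (r ^ (-(2:ℝ)) * (ε / t) ^ ((1:ℝ)/2)) with hNdef
  have hM : 0 < C0 * N := by positivity
  -- non-integrable data give zero
  by_cases hint0 : Integrable f0
  swap
  · have : PsiG ψ r R γ ε1 ε2 ε t f0 = 0 := by
      rw [PsiG_eq, FT_nonint f0 hint0]
      funext x
      unfold FTinv
      rw [Real.fourierInv_eq]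
      simp
    rw [this, eLpNorm_zero]
    exact zero_le
  -- pass to a measurable representative
  obtain ⟨f, hfm, hff⟩ : ∃ f : E3 → ℂ, Measurable f ∧ f0 =ᵐ[volume] f :=
    ⟨hf0.1.mk f0, hf0.1.stronglyMeasurable_mk.measurable, hf0.1.ae_eq_mk⟩
  have hint : Integrable f := hint0.congr hff
  have hf : MemLp f qbar volume := (memLp_congr_ae hff).1 hf0
  rw [PsiG_eq, FT_congr f0 f hff, eLpNorm_congr_ae hff]
  by_cases hqt : q = ⊤
  · subst hqt
    have hb : qbar = 1 := by
      simpa using hqq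
    subst hb
    rw [eLpNorm_exponent_top, ENNReal.toReal_top, _root_.div_zero, _root_.sub_zero, Real.rpow_one]
    have hsup := T_sup γ r ε1 ε2 ψ hψ R (t / ε) hR0 (C0 * N) hK f hint
    refine (eLpNormEssSup_le_of_ae_bound (Filter.Eventually.of_forall hsup)).trans ?_
    rw [eLpNorm_one_eq_lintegral_enorm, ← ofReal_integral_norm_eq_lintegral_enorm hint,
      ← ENNReal.ofReal_mul (by positivity)]
    apply ENNReal.ofReal_le_ofReal
    have : 0 ≤ ∫ y, ‖f y‖ := integral_nonneg fun x => norm_nonneg _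
    have : 0 ≤ C0 * N * ∫ y, ‖f y‖ := by positivity
    nlinarith
  have hqbt : qbar ≠ ⊤ := (hqb2.trans_lt (by simp)).ne
  have hqb0 : 0 < qbar.toReal := ENNReal.toReal_pos (by rintro rfl; simp at hqb1) hqbt
  have hq2 : 2 ≤ q.toReal := by
    have := ENNReal.toReal_mono hqt hq
    simpa using this
  have hreal : 1 / q.toReal + 1 / qbar.toReal = 1 := by
    have := congrArg ENNReal.toReal hqq
    rw [ENNReal.toReal_add] at this
    · simpa using this
    · simp; rintro rfl; simp at hq
    · simp; rintro rfl; simp at hqb1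
  have eq : ENNReal.ofReal q.toReal = q := ENNReal.ofReal_toReal hqt
  have eqb : ENNReal.ofReal qbar.toReal = qbar := ENNReal.ofReal_toReal hqbt
  rcases hq2.eq_or_lt with h | h
  · have hq' : q = 2 := by rw [← eq, ← h]; simp
    have hqb' : qbar = 2 := by
      rw [← h] at hreal
      have : qbar.toReal = 2 := by field_simp at hreal; linarith
      rw [← eqb, this]; simp
    subst hq'
    subst hqb'
    refine (T_L2 γ r ε1 ε2 ψ hψ R (t / ε) hR0 f hint hf).trans ?_
    refine le_mul_of_one_le_left zero_le ?_
    rw [ENNReal.one_le_ofReal, ← h]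
    norm_num
    linarith
  · have hmid := main_mid γ ψ hψ r R ε1 ε2 (t / ε) hR0 (C0 * N) hM hK qbar.toReal q.toReal hqb0 h hreal f hfm hint
      (by rwa [eqb])
    rw [eq, eqb] at hmid
    refine hmid.trans ?_
    refine mul_le_mul_left (ENNReal.ofReal_le_ofReal ?_) _
    have hθ1 : 1 - 2 / q.toReal ≤ 1 := by
      have : 0 ≤ 2 / q.toReal := by positivity
      linarith
    rw [Real.mul_rpow (by linarith) hN.le]
    have : C0 ^ (1 - 2 / q.toReal) ≤ C0 := by
      calc C0 ^ (1 - 2 / q.toReal) ≤ C0 ^ (1:ℝ) := Real.rpow_le_rpow_of_exponent_le hC0 hθ1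
        _ = C0 := Real.rpow_one _
    have hNθ : 0 ≤ N ^ (1 - 2 / q.toReal) := by positivity
    calc 2 * (C0 ^ (1 - 2 / q.toReal) * N ^ (1 - 2 / q.toReal)) ≤ 2 * (C0 * N ^ (1 - 2 / q.toReal)) := by gcongr
      _ = _ := by ring
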